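/- arXiv:1209.4972 — 2 statements merged into one kernel-verified Lean document; each statement's English description precedes it below -/
import Mathlib

section
/- For every graph G in the family 𝒢_4, the quotient ring S/J_G is Cohen–Macaulay. -/
open MvPolynomial

noncomputable section

/-- The binomial edge ideal of a simple graph `G` on vertex type `V`, inside the
polynomial ring `K[x_i, y_i : i ∈ V]`, modelled as `MvPolynomial (V ⊕ V) K`
with `x_i = X (Sum.inl i)` and `y_i = X (Sum.inr i)`. -/
def binomialEdgeIdeal (K : Type*) [Field K] {V : Type*} (G : SimpleGraph V) :
    Ideal (MvPolynomial (V ⊕ V) K) :=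
  Ideal.span { f | ∃ i j : V, G.Adj i j ∧
    f = X (Sum.inl i) * X (Sum.inr j) - X (Sum.inl j) * X (Sum.inr i) }

/-- The minimal number of generators of an ideal. -/
def mu {R : Type*} [CommRing R] (J : Ideal R) : ℕ :=
  sInf {k | ∃ s : Finset R, s.card = k ∧ Ideal.span (s : Set R) = J}

/-- The height of an ideal: the infimum of the heights of the primes containing it. -/
def htI {R : Type*} [CommRing R] (I : Ideal R) : ℕ∞ :=
  ⨅ (P : PrimeSpectrum R) (_ : I ≤ P.asIdeal), Order.height P

/-- An ideal is unmixed if all of its minimal primes have height equal to its height. -/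
def IsUnmixed {R : Type*} [CommRing R] (I : Ideal R) : Prop :=
  ∀ P ∈ I.minimalPrimes, htI P = htI I

/-- The depth of a ring `R` with respect to an ideal `m`: the supremum of the
lengths of regular sequences on `R` consisting of elements of `m`. -/
def ringDepth (R : Type*) [CommRing R] (m : Ideal R) : ℕ∞ :=
  sSup {d : ℕ∞ | ∃ l : List R, (l.length : ℕ∞) = d ∧ (∀ x ∈ l, x ∈ m) ∧
    RingTheory.Sequence.IsRegular R l}

/-- The graded maximal ideal of the quotient of a polynomial ring by an ideal `J`:
the image of the ideal generated by all the variables. -/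
def gradedMaxQuot {K σ : Type*} [Field K] (J : Ideal (MvPolynomial σ K)) :
    Ideal (MvPolynomial σ K ⧸ J) :=
  (Ideal.span (Set.range (X : σ → MvPolynomial σ K))).map (Ideal.Quotient.mk J)

/-- `S/J` is Cohen–Macaulay: its depth with respect to the graded maximal ideal
equals its Krull dimension. -/
def IsCMQuot {K σ : Type*} [Field K] (J : Ideal (MvPolynomial σ K)) : Prop :=
  (ringDepth (MvPolynomial σ K ⧸ J) (gradedMaxQuot J) : WithBot ℕ∞) =
    ringKrullDim (MvPolynomial σ K ⧸ J)

/-- A graph is a path graph if its vertices can be ordered `v_1, …, v_m` so that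
its edges are exactly `{v_i, v_{i+1}}` for `1 ≤ i ≤ m - 1`. -/
def IsPathGraph {V : Type*} (H : SimpleGraph V) : Prop :=
  ∃ (m : ℕ) (e : V ≃ Fin m), ∀ a b : V,
    H.Adj a b ↔ ((e a : ℕ) + 1 = (e b : ℕ) ∨ (e b : ℕ) + 1 = (e a : ℕ))

/-- The vertex set of a connected component, as a set of vertices. -/
def compSupp {V : Type*} (G : SimpleGraph V) (c : G.ConnectedComponent) : Set V :=
  {v | G.connectedComponentMk v = c}

end

noncomputable section

/-- The adjacency-generating relation of the graph in the family `𝒢₃` with path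
lengths `r`, `s`, `t`: three paths `u_1—…—u_r`, `v_1—…—v_s`, `w_1—…—w_t` together
with the triangle `u_1—v_1—w_1—u_1`. -/
def g3Rel (r s t : ℕ) : (Fin r ⊕ (Fin s ⊕ Fin t)) → (Fin r ⊕ (Fin s ⊕ Fin t)) → Prop
  | Sum.inl i, Sum.inl j => (i : ℕ) + 1 = (j : ℕ)
  | Sum.inr (Sum.inl i), Sum.inr (Sum.inl j) => (i : ℕ) + 1 = (j : ℕ)
  | Sum.inr (Sum.inr i), Sum.inr (Sum.inr j) => (i : ℕ) + 1 = (j : ℕ)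
  | Sum.inl i, Sum.inr (Sum.inl j) => (i : ℕ) = 0 ∧ (j : ℕ) = 0
  | Sum.inl i, Sum.inr (Sum.inr j) => (i : ℕ) = 0 ∧ (j : ℕ) = 0
  | Sum.inr (Sum.inl i), Sum.inr (Sum.inr j) => (i : ℕ) = 0 ∧ (j : ℕ) = 0
  | _, _ => False

/-- The member of the family `𝒢₃` with path lengths `r`, `s`, `t`. -/
def graphG3 (r s t : ℕ) : SimpleGraph (Fin r ⊕ (Fin s ⊕ Fin t)) :=
  SimpleGraph.fromRel (g3Rel r s t)

/-- The adjacency-generating relation of the graph in the family `𝒢₄` with path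
lengths `r`, `s`: two paths `u_1—…—u_r` and `v_1—…—v_s` together with the
edges `u_1—v_1` and `u_2—v_2`. -/
def g4Rel (r s : ℕ) : (Fin r ⊕ Fin s) → (Fin r ⊕ Fin s) → Prop
  | Sum.inl i, Sum.inl j => (i : ℕ) + 1 = (j : ℕ)
  | Sum.inr i, Sum.inr j => (i : ℕ) + 1 = (j : ℕ)
  | Sum.inl i, Sum.inr j => ((i : ℕ) = 0 ∧ (j : ℕ) = 0) ∨ ((i : ℕ) = 1 ∧ (j : ℕ) = 1)
  | _, _ => False

/-- The member of the family `𝒢₄` with path lengths `r`, `s`. -/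
def graphG4 (r s : ℕ) : SimpleGraph (Fin r ⊕ Fin s) :=
  SimpleGraph.fromRel (g4Rel r s)

/-!
The outer vertices of `G` are attached one at a time. If `(p, q)` are the variables of an end
vertex and `(x, y)` those of a new vertex joined to it, then the minor `p y - q x` is `-q ^ 2`
modulo `x - q` and `y`. Hence a homogeneous system of parameters that is a regular sequence and
contains `q`, `x`, `y` stays one, with `x - q` and `y` in place of the three, after adding the
minor. This constructs all paths, and it reduces the theorem to the path `u₃ u₂ u₁ v₁ v₂ v₃` with
its chord `{u₂, v₂}`, whose minor `f` has to be added without shortening the regular sequence.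

That works if the ideal quotient of the path ideal by `f` is compatible with reduction modulo the
sequence. The reduction of the path ideal is a complete intersection in the five variables
`z₀, …, z₄`, with relations `z_k ^ 2 = z_{k-1} z_{k+1}`. An explicit ideal annihilates `f`; the
twelve standard words span the quotient by it, and the socle functional pairs them perfectly
through `f`, so the annihilator of `f` modulo the sequence is no larger.
-/

open RingTheory.Sequence Module

attribute [local instance] MvPolynomial.gradedAlgebra

section RegularSequence

variable {R : Type*} [CommRing R]

/-- The analogue of the third isomorphism theorem behind `(R ⧸ I) ⧸ J(R ⧸ I) ≅ R ⧸ (I + J)`, for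
`R ⧸ I` as an `R`-module. -/
def quotientQuotientSMulTopEquiv (I J : Ideal R) :
    ((R ⧸ I) ⧸ (J • ⊤ : Submodule R (R ⧸ I))) ≃ₗ[R] R ⧸ (I ⊔ J) :=
  (Submodule.quotEquivOfEq _ (Submodule.map I.mkQ J) (by
    rw [← Submodule.range_mkQ, ← Submodule.map_top, ← Submodule.map_smul'', smul_eq_mul,
      Ideal.mul_top])).trans (Submodule.quotientQuotientEquivQuotientSup I J)

lemma isWeaklyRegular_quotient_append_iff {I : Ideal R} {L₁ L₂ : List R} :
    IsWeaklyRegular (R ⧸ I) (L₁ ++ L₂) ↔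
      IsWeaklyRegular (R ⧸ I) L₁ ∧ IsWeaklyRegular (R ⧸ (I ⊔ Ideal.ofList L₁)) L₂ := by
  rw [isWeaklyRegular_append_iff,
    (quotientQuotientSMulTopEquiv I (Ideal.ofList L₁)).isWeaklyRegular_congr]

lemma isWeaklyRegular_quotient_cons_iff {I : Ideal R} {a : R} {L : List R} :
    IsWeaklyRegular (R ⧸ I) (a :: L) ↔
      (∀ g, a * g ∈ I → g ∈ I) ∧ IsWeaklyRegular (R ⧸ (I ⊔ Ideal.span {a})) L := by
  rw [← List.singleton_append, isWeaklyRegular_quotient_append_iff, isWeaklyRegular_singleton_iff,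
    isSMulRegular_quotient_iff_mem_of_smul_mem, Ideal.ofList_singleton]
  rfl

lemma supportDim_quotSMulTop_succ_le_of_isSMulRegular {M : Type*} [AddCommGroup M] [Module R M]
    [Module.Finite R M] {x : R} (hx : IsSMulRegular M x) :
    supportDim R (QuotSMulTop x M) + 1 ≤ supportDim R M :=
  supportDim_quotSMulTop_succ_le_of_notMem_minimalPrimes fun _ hp =>
    hx.notMem_of_mem_minimalPrimes hp

lemma length_le_supportDim_of_isRegular {M : Type*} [AddCommGroup M] [Module R M]
    [Module.Finite R M] {L : List R} (h : IsRegular M L) :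
    (L.length : WithBot ℕ∞) ≤ supportDim R M := by
  induction L generalizing M with
  | nil =>
    have := h.nontrivial
    rw [List.length_nil, Nat.cast_zero]
    have := (nonempty_support_of_nontrivial (R := R) (M := M)).to_subtype
    exact Order.krullDim_nonneg
  | cons x L ih =>
    rw [isRegular_cons_iff] at h
    calc ((x :: L).length : WithBot ℕ∞) = L.length + 1 := by simp
      _ ≤ supportDim R (QuotSMulTop x M) + 1 := by gcongr; exact ih h.2
      _ ≤ supportDim R M := supportDim_quotSMulTop_succ_le_of_isSMulRegular h.1

lemma ringKrullDim_quotient_sup_span_singleton_succ_le {I : Ideal R} {a : R}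
    (ha : ∀ g, a * g ∈ I → g ∈ I) :
    ringKrullDim (R ⧸ (I ⊔ Ideal.span {a})) + 1 ≤ ringKrullDim (R ⧸ I) := by
  let e : QuotSMulTop a (R ⧸ I) ≃ₗ[R] R ⧸ (I ⊔ Ideal.span {a}) :=
    (Submodule.quotEquivOfEq _ _ (Submodule.ideal_span_singleton_smul a ⊤).symm).trans
      (quotientQuotientSMulTopEquiv I (Ideal.span {a}))
  rw [← supportDim_quotient_eq_ringKrullDim, ← supportDim_quotient_eq_ringKrullDim,
    ← supportDim_eq_of_equiv e]
  exact supportDim_quotSMulTop_succ_le_of_isSMulRegular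
    ((isSMulRegular_quotient_iff_mem_of_smul_mem I a).2 ha)

/-- If `I'` is the ideal quotient `I : f` after reduction modulo `a`, then `a` stays regular on the
cokernel of the multiplication by `f` from `R ⧸ I'` to `R ⧸ I`. -/
lemma mem_of_mul_mem_sup_span_singleton {I I' : Ideal R} {a f g : R}
    (ha : ∀ g, a * g ∈ I → g ∈ I) (hf : ∀ g ∈ I', g * f ∈ I)
    (hcolon : ∀ g, g * f ∈ I ⊔ Ideal.span {a} → g ∈ I' ⊔ Ideal.span {a})
    (hg : a * g ∈ I ⊔ Ideal.span {f}) : g ∈ I ⊔ Ideal.span {f} := by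
  obtain ⟨c, hc, d, hd, hcd⟩ := Submodule.mem_sup.1 hg
  obtain ⟨h, rfl⟩ := Ideal.mem_span_singleton'.1 hd
  have hh : h * f ∈ I ⊔ Ideal.span {a} := by
    rw [show h * f = -c + g * a by linear_combination hcd]
    exact Submodule.add_mem_sup (neg_mem hc)
      (Ideal.mul_mem_left _ _ (Ideal.mem_span_singleton_self a))
  obtain ⟨i, hi, d', hd', rfl⟩ := Submodule.mem_sup.1 (hcolon h hh)
  obtain ⟨e, rfl⟩ := Ideal.mem_span_singleton'.1 hd'
  have hmem : g - e * f ∈ I := by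
    apply ha
    rw [show a * (g - e * f) = c + i * f by linear_combination -hcd]
    exact add_mem hc (hf i hi)
  rw [← sub_add_cancel g (e * f)]
  exact Submodule.add_mem_sup hmem (Ideal.mul_mem_left _ _ (Ideal.mem_span_singleton_self f))

end RegularSequence

section Graded

variable {σ R : Type*} [CommRing R] {I J : Ideal (MvPolynomial σ R)}
  {a b f g p t : MvPolynomial σ R} {L L₁ L₂ : List (MvPolynomial σ R)}

/-- The polynomial `p` is homogeneous of some positive degree. -/
def IsPosHomogeneous (p : MvPolynomial σ R) : Prop := ∃ n, p.IsHomogeneous (n + 1)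

lemma isPosHomogeneous_of_isHomogeneous_one (hp : p.IsHomogeneous 1) : IsPosHomogeneous p :=
  ⟨0, hp⟩

lemma homogeneousComponent_eq_zero_of_mem_idealOfVars_pow {d n : ℕ} (hd : d < n)
    (hp : p ∈ idealOfVars σ R ^ n) : homogeneousComponent d p = 0 := by
  ext m
  rw [coeff_homogeneousComponent, coeff_zero]
  split_ifs with hm
  · exact (mem_pow_idealOfVars_iff' n p).1 hp m (hm ▸ hd)
  · rfl

lemma IsPosHomogeneous.mem_idealOfVars (hp : IsPosHomogeneous p) : p ∈ idealOfVars σ R := by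
  obtain ⟨n, hp⟩ := hp
  rw [← pow_one (idealOfVars σ R), mem_pow_idealOfVars_iff']
  exact fun m hm => hp.coeff_eq_zero (by omega)

lemma isHomogeneous_span_of_isPosHomogeneous {s : Set (MvPolynomial σ R)}
    (h : ∀ p ∈ s, IsPosHomogeneous p) :
    (Ideal.span s).IsHomogeneous (homogeneousSubmodule σ R) :=
  Ideal.homogeneous_span _ _ fun p hp => (h p hp).imp' _ fun _ => id

lemma isHomogeneous_sup_span_singleton (hI : I.IsHomogeneous (homogeneousSubmodule σ R))
    (ha : IsPosHomogeneous a) : (I ⊔ Ideal.span {a}).IsHomogeneous (homogeneousSubmodule σ R) :=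
  hI.sup (isHomogeneous_span_of_isPosHomogeneous (by simpa))

/-- Writing `t = 1 - s`, the polynomial `g` agrees modulo `I` with `s ^ n * g`, which has no
components of degree less than `n`. -/
lemma mem_of_mul_mem_of_sub_one_mem_idealOfVars (hI : I.IsHomogeneous (homogeneousSubmodule σ R))
    (ht : t - 1 ∈ idealOfVars σ R) (h : t * g ∈ I) : g ∈ I := by
  rw [mem_iff_homogeneousComponent_mem hI]
  intro d
  have hmem : g - (1 - t) ^ (d + 1) * g ∈ I := by
    obtain ⟨c, hc⟩ := one_sub_dvd_one_sub_pow (1 - t) (d + 1)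
    rw [show g - (1 - t) ^ (d + 1) * g = c * (t * g) by linear_combination g * hc]
    exact I.mul_mem_left c h
  have hhigh : (1 - t) ^ (d + 1) * g ∈ idealOfVars σ R ^ (d + 1) :=
    Ideal.mul_mem_right _ _ (Ideal.pow_mem_pow (by simpa using neg_mem ht) _)
  have := homogeneousComponent_mem_of_mem hI hmem d
  rwa [map_sub, homogeneousComponent_eq_zero_of_mem_idealOfVars_pow d.lt_succ_self hhigh,
    sub_zero] at this

/-- Nakayama's lemma for an ideal `J` with `J ≤ I + aJ`, where `I` is graded. -/
lemma le_of_forall_exists_sub_mul_mem (hI : I.IsHomogeneous (homogeneousSubmodule σ R))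
    (ha : a ∈ idealOfVars σ R) (hJ : J.FG) (h : ∀ g ∈ J, ∃ e ∈ J, g - e * a ∈ I) : J ≤ I := by
  have hle : J ≤ I ⊔ Ideal.span {a} • J := fun g hg => by
    obtain ⟨e, he, hge⟩ := h g hg
    rw [← sub_add_cancel g (e * a), mul_comm]
    exact Submodule.add_mem_sup (by rwa [mul_comm])
      (Submodule.smul_mem_smul (Ideal.mem_span_singleton_self a) he)
  obtain ⟨t, ht, htJ⟩ :=
    Submodule.exists_sub_one_mem_and_smul_le_of_fg_of_le_sup hJ le_rfl hle
  refine fun g hg => mem_of_mul_mem_of_sub_one_mem_idealOfVars hI ?_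
    (htJ (Submodule.smul_mem_pointwise_smul g t J hg))
  exact (Ideal.span_singleton_le_iff_mem _).2 ha ht

lemma mem_of_mul_mem_of_colon_sup [IsNoetherianRing R] [Finite σ]
    (hJ : J.IsHomogeneous (homogeneousSubmodule σ R))
    (ha : a ∈ idealOfVars σ R) (hreg : ∀ g, a * g ∈ I → g ∈ I) (hf : ∀ g ∈ J, g * f ∈ I)
    (hcolon : ∀ g, g * f ∈ I ⊔ Ideal.span {a} → g ∈ J ⊔ Ideal.span {a})
    (hg : g * f ∈ I) : g ∈ J := by
  suffices I.colon {f} ≤ J from this (Submodule.mem_colon_singleton.2 hg)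
  refine le_of_forall_exists_sub_mul_mem hJ ha (IsNoetherian.noetherian _) ?_
  intro g hg
  rw [Submodule.mem_colon_singleton, smul_eq_mul] at hg
  obtain ⟨i, hi, d, hd, rfl⟩ := Submodule.mem_sup.1 (hcolon g (Ideal.mem_sup_left hg))
  obtain ⟨e, rfl⟩ := Ideal.mem_span_singleton'.1 hd
  refine ⟨e, Submodule.mem_colon_singleton.2 (hreg _ ?_), by simpa using hi⟩
  rw [show a * (e • f) = (i + e * a) * f - i * f by rw [smul_eq_mul]; ring]
  exact sub_mem hg (hf i hi)

/-- If `J` is the ideal quotient `I : f` after reduction modulo a regular sequence `L`, then it is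
so before, and `L` stays regular on the cokernel of the multiplication by `f` from `S ⧸ J` to
`S ⧸ I`. -/
lemma isWeaklyRegular_sup_span_singleton_of_colon [IsNoetherianRing R] [Finite σ]
    (hJ : J.IsHomogeneous (homogeneousSubmodule σ R)) (hL : ∀ p ∈ L, IsPosHomogeneous p)
    (h : IsWeaklyRegular (MvPolynomial σ R ⧸ I) L) (hf : ∀ g ∈ J, g * f ∈ I)
    (hcolon : ∀ g, g * f ∈ I ⊔ Ideal.ofList L → g ∈ J ⊔ Ideal.ofList L) :
    IsWeaklyRegular (MvPolynomial σ R ⧸ (I ⊔ Ideal.span {f})) L ∧ ∀ g, g * f ∈ I → g ∈ J := by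
  induction L generalizing I J with
  | nil => exact ⟨.nil _ _, by simpa using hcolon⟩
  | cons a L ih =>
    rw [List.forall_mem_cons] at hL
    rw [isWeaklyRegular_quotient_cons_iff] at h ⊢
    simp only [Ideal.ofList_cons, ← sup_assoc] at hcolon
    have hf' : ∀ g ∈ J ⊔ Ideal.span {a}, g * f ∈ I ⊔ Ideal.span {a} := by
      intro g hg
      obtain ⟨i, hi, d, hd, rfl⟩ := Submodule.mem_sup.1 hg
      rw [add_mul]
      exact Submodule.add_mem_sup (hf i hi) (Ideal.mul_mem_right _ _ hd)
    obtain ⟨hregular, hcolon'⟩ :=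
      ih (isHomogeneous_sup_span_singleton hJ hL.1) hL.2 h.2 hf' hcolon
    rw [sup_right_comm]
    exact ⟨⟨fun g => mem_of_mul_mem_sup_span_singleton h.1 hf hcolon', hregular⟩,
      fun g => mem_of_mul_mem_of_colon_sup hJ hL.1.mem_idealOfVars h.1 hf hcolon'⟩

/-- The swap of two entries `a, b` is the case `J = I`, `f = b`, `L = [a]` of
`isWeaklyRegular_sup_span_singleton_of_colon`. -/
lemma isWeaklyRegular_of_perm [IsNoetherianRing R] [Finite σ]
    (hI : I.IsHomogeneous (homogeneousSubmodule σ R))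
    (hL : ∀ p ∈ L₁, IsPosHomogeneous p) (hp : L₁.Perm L₂)
    (h : IsWeaklyRegular (MvPolynomial σ R ⧸ I) L₁) :
    IsWeaklyRegular (MvPolynomial σ R ⧸ I) L₂ := by
  induction hp generalizing I with
  | nil => exact .nil _ _
  | cons a _ ih =>
    rw [List.forall_mem_cons] at hL
    rw [isWeaklyRegular_quotient_cons_iff] at h ⊢
    exact ⟨h.1, ih (isHomogeneous_sup_span_singleton hI hL.1) hL.2 h.2⟩
  | swap a b L =>
    simp only [List.forall_mem_cons] at hL
    simp only [isWeaklyRegular_quotient_cons_iff] at h ⊢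
    obtain ⟨hb, ha, htail⟩ := h
    obtain ⟨hb', ha'⟩ := isWeaklyRegular_sup_span_singleton_of_colon (L := [b]) (f := a) hI
      (by simpa using hL.1) (isWeaklyRegular_quotient_cons_iff.2 ⟨hb, .nil _ _⟩)
      (fun g => I.mul_mem_right a) (by simpa [mul_comm] using ha)
    exact ⟨fun g => by simpa [mul_comm] using ha' g,
      (isWeaklyRegular_quotient_cons_iff.1 hb').1, by rwa [sup_right_comm]⟩
  | trans h₁ _ ih₁ ih₂ => exact ih₂ hI (fun p hp => hL p (h₁.mem_iff.2 hp)) (ih₁ hI hL h)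

lemma isWeaklyRegular_quotient_span_image_X (s : Set σ) {l : List σ} (hl : l.Nodup)
    (hs : ∀ i ∈ l, i ∉ s) :
    IsWeaklyRegular (MvPolynomial σ R ⧸ Ideal.span ((X : σ → MvPolynomial σ R) '' s))
      (l.map X : List (MvPolynomial σ R)) := by
  induction l generalizing s with
  | nil => exact .nil _ _
  | cons i l ih =>
    rw [List.nodup_cons] at hl
    rw [List.forall_mem_cons] at hs
    rw [List.map_cons, isWeaklyRegular_quotient_cons_iff]
    refine ⟨fun g hg => ?_, ?_⟩
    · rw [mem_ideal_span_X_image] at hg ⊢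
      intro m hm
      obtain ⟨j, hj, hmj⟩ := hg (Finsupp.single i 1 + m) (by
        rwa [MvPolynomial.mem_support_iff, coeff_X_mul, ← MvPolynomial.mem_support_iff])
      have hij : i ≠ j := fun h => hs.1 (h ▸ hj)
      exact ⟨j, hj, by simpa [Finsupp.single_apply, hij] using hmj⟩
    · rw [← Ideal.span_union, ← Set.image_singleton, ← Set.image_union]
      refine ih _ hl.2 fun j hj => ?_
      rw [Set.union_singleton, Set.mem_insert_iff, not_or]
      exact ⟨fun h => hl.1 (h ▸ hj), hs.2 j hj⟩

end Graded

section SOP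

lemma length_le_ringDepth {R : Type*} [CommRing R] {m : Ideal R} {L : List R}
    (hm : ∀ x ∈ L, x ∈ m) (hL : IsRegular R L) : (L.length : ℕ∞) ≤ ringDepth R m :=
  le_sSup ⟨L, rfl, hm, hL⟩

lemma ringDepth_le_ringKrullDim {R : Type*} [CommRing R] [Nontrivial R] (m : Ideal R) :
    (ringDepth R m : WithBot ℕ∞) ≤ ringKrullDim R := by
  obtain ⟨d, hd⟩ := WithBot.ne_bot_iff_exists.1
    ((WithBot.bot_lt_coe 0).trans_le (ringKrullDim_nonneg_of_nontrivial (R := R))).ne'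
  rw [← hd, WithBot.coe_le_coe]
  refine sSup_le ?_
  rintro _ ⟨L, rfl, -, hL⟩
  rw [← WithBot.coe_le_coe, hd, ← supportDim_self_eq_ringKrullDim]
  exact length_le_supportDim_of_isRegular hL

variable {K σ : Type*} [Field K] {I : Ideal (MvPolynomial σ K)}
  {a b f p q x y : MvPolynomial σ K} {L L₁ L₂ : List (MvPolynomial σ K)}

/-- The list `L` is a homogeneous system of parameters of the graded ring `K[σ] ⧸ I` and a regular
sequence on it, so it witnesses that `K[σ] ⧸ I` is Cohen–Macaulay. As the length of a regular
sequence is at most the dimension, only the converse bound is recorded. -/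
structure IsRegularSOP (I : Ideal (MvPolynomial σ K)) (L : List (MvPolynomial σ K)) : Prop where
  isHomogeneous : I.IsHomogeneous (homogeneousSubmodule σ K)
  le_idealOfVars : I ≤ idealOfVars σ K
  isPosHomogeneous : ∀ p ∈ L, IsPosHomogeneous p
  isWeaklyRegular : IsWeaklyRegular (MvPolynomial σ K ⧸ I) L
  ringKrullDim_le : ringKrullDim (MvPolynomial σ K ⧸ I) ≤ L.length

lemma idealOfVars_ne_top (σ K : Type*) [Field K] : idealOfVars σ K ≠ ⊤ := by
  rw [Ideal.ne_top_iff_one, ← pow_one (idealOfVars σ K), ← C_1, C_mem_pow_idealOfVars_iff]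
  simp

namespace IsRegularSOP

lemma isRegular_map_mk (h : IsRegularSOP I L) :
    IsRegular (MvPolynomial σ K ⧸ I) (L.map (Ideal.Quotient.mk I)) := by
  refine ⟨(isWeaklyRegular_map_algebraMap_iff _ _ L).2 h.isWeaklyRegular, ?_⟩
  rw [smul_eq_mul, Ideal.mul_top, ← Ideal.map_ofList]
  intro htop
  have hle : Ideal.ofList L ≤ idealOfVars σ K :=
    Ideal.span_le.2 fun p hp => (h.isPosHomogeneous p hp).mem_idealOfVars
  apply idealOfVars_ne_top σ K
  rw [← Ideal.comap_map_mk h.le_idealOfVars, top_le_iff.1 (htop.trans_le (Ideal.map_mono hle)),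
    Ideal.comap_top]

theorem isCMQuot (h : IsRegularSOP I L) : IsCMQuot I := by
  have hmem : ∀ p ∈ L.map (Ideal.Quotient.mk I), p ∈ gradedMaxQuot I :=
    List.forall_mem_map.2 fun p hp =>
      Ideal.mem_map_of_mem _ (h.isPosHomogeneous p hp).mem_idealOfVars
  have : Nontrivial (MvPolynomial σ K ⧸ I) := Ideal.Quotient.nontrivial_iff.2
    (ne_top_of_le_ne_top (idealOfVars_ne_top σ K) h.le_idealOfVars)
  refine (ringDepth_le_ringKrullDim _).antisymm (h.ringKrullDim_le.trans ?_)
  simpa using WithBot.coe_le_coe.2 (length_le_ringDepth hmem h.isRegular_map_mk)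

lemma sup_span_singleton (h : IsRegularSOP I (f :: L)) :
    IsRegularSOP (I ⊔ Ideal.span {f}) L := by
  obtain ⟨hI, hle, hL, hreg, hdim⟩ := h
  rw [List.forall_mem_cons] at hL
  rw [isWeaklyRegular_quotient_cons_iff] at hreg
  refine ⟨isHomogeneous_sup_span_singleton hI hL.1,
    sup_le hle ((Ideal.span_singleton_le_iff_mem _).2 hL.1.mem_idealOfVars), hL.2, hreg.2, ?_⟩
  have := (ringKrullDim_quotient_sup_span_singleton_succ_le hreg.1).trans hdim
  rw [List.length_cons, Nat.cast_add_one] at this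
  exact ENat.WithBot.add_le_add_natCast_right_iff.1 this

variable [Finite σ]

lemma perm (h : IsRegularSOP I L₁) (hp : L₁.Perm L₂) : IsRegularSOP I L₂ where
  isHomogeneous := h.isHomogeneous
  le_idealOfVars := h.le_idealOfVars
  isPosHomogeneous p hp' := h.isPosHomogeneous p (hp.mem_iff.2 hp')
  isWeaklyRegular := isWeaklyRegular_of_perm h.isHomogeneous h.isPosHomogeneous hp h.isWeaklyRegular
  ringKrullDim_le := hp.length_eq ▸ h.ringKrullDim_le

lemma replace {n : ℕ} (h : IsRegularSOP I (a :: L)) (hb : IsPosHomogeneous b)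
    (hab : a ^ n ∈ I ⊔ Ideal.ofList (b :: L)) : IsRegularSOP I (b :: L) := by
  have hLa := h.perm (List.perm_append_singleton a L).symm
  obtain ⟨hL, ha⟩ := isWeaklyRegular_quotient_append_iff.1 hLa.isWeaklyRegular
  have hmem : ∀ g, b * g ∈ I ⊔ Ideal.ofList L → g ∈ I ⊔ Ideal.ofList L := by
    intro g hg
    rw [Ideal.ofList_cons, sup_comm (Ideal.span _), ← sup_assoc] at hab
    obtain ⟨j, hj, d, hd, hjd⟩ := Submodule.mem_sup.1 hab
    obtain ⟨c, rfl⟩ := Ideal.mem_span_singleton'.1 hd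
    refine (isSMulRegular_quotient_iff_mem_of_smul_mem _ _).1
      (((isWeaklyRegular_singleton_iff _ _).1 ha).pow n) g ?_
    rw [← hjd, smul_eq_mul, show (j + c * b) * g = j * g + c * (b * g) by ring]
    exact add_mem (Ideal.mul_mem_right _ _ hj) (Ideal.mul_mem_left _ _ hg)
  have hL' := (List.forall_mem_cons.1 h.isPosHomogeneous).2
  exact {
    isHomogeneous := h.isHomogeneous
    le_idealOfVars := h.le_idealOfVars
    isPosHomogeneous := List.forall_mem_cons.2 ⟨hb, hL'⟩
    isWeaklyRegular := isWeaklyRegular_of_perm h.isHomogeneous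
      (by simpa [or_imp, forall_and] using ⟨hL', hb⟩) (List.perm_append_singleton b L)
      (isWeaklyRegular_quotient_append_iff.2
        ⟨hL, isWeaklyRegular_quotient_cons_iff.2 ⟨hmem, .nil _ _⟩⟩)
    ringKrullDim_le := by simpa using h.ringKrullDim_le }

lemma sup_span_singleton_of_colon {J : Ideal (MvPolynomial σ K)} (h : IsRegularSOP I L)
    (hJ : J.IsHomogeneous (homogeneousSubmodule σ K)) (hf : IsPosHomogeneous f)
    (hJf : ∀ g ∈ J, g * f ∈ I)
    (hcolon : ∀ g, g * f ∈ I ⊔ Ideal.ofList L → g ∈ J ⊔ Ideal.ofList L) :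
    IsRegularSOP (I ⊔ Ideal.span {f}) L where
  isHomogeneous := isHomogeneous_sup_span_singleton h.isHomogeneous hf
  le_idealOfVars :=
    sup_le h.le_idealOfVars ((Ideal.span_singleton_le_iff_mem _).2 hf.mem_idealOfVars)
  isPosHomogeneous := h.isPosHomogeneous
  isWeaklyRegular := (isWeaklyRegular_sup_span_singleton_of_colon hJ h.isPosHomogeneous
    h.isWeaklyRegular hJf hcolon).1
  ringKrullDim_le := (ringKrullDim_le_of_surjective _
    (Ideal.Quotient.factor_surjective le_sup_left)).trans h.ringKrullDim_le

/-- For a new edge joining `(p, q)` to a new vertex `(x, y)`: modulo `x - q` and `y` its minor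
becomes `-q ^ 2`. -/
lemma attach (h : IsRegularSOP I (q :: x :: y :: L)) (hp : p.IsHomogeneous 1)
    (hq : q.IsHomogeneous 1) (hx : x.IsHomogeneous 1) (hy : y.IsHomogeneous 1) :
    IsRegularSOP (I ⊔ Ideal.span {p * y - q * x}) ((x - q) :: y :: L) := by
  have hreplace : IsRegularSOP I (q :: (x - q) :: y :: L) := by
    refine ((h.perm (.swap x q _)).replace (n := 1)
      (isPosHomogeneous_of_isHomogeneous_one (hx.sub hq)) (Ideal.mem_sup_right ?_)).perm
        (.swap _ _ _)
    rw [pow_one, ← sub_add_cancel x q]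
    exact add_mem (Ideal.subset_span (by simp)) (Ideal.subset_span (by simp))
  refine (hreplace.replace (n := 2) ⟨1, (hp.mul hy).sub (hq.mul hx)⟩
    (Ideal.mem_sup_right ?_)).sup_span_singleton
  rw [show q ^ 2 = p * y - q * (x - q) - (p * y - q * x) by ring]
  exact sub_mem (sub_mem (Ideal.mul_mem_left _ _ (Ideal.subset_span (by simp)))
    (Ideal.mul_mem_left _ _ (Ideal.subset_span (by simp)))) (Ideal.subset_span (by simp))

end IsRegularSOP

lemma isRegularSOP_bot {l : List σ} (hl : l.Nodup) (hmem : ∀ i, i ∈ l) :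
    IsRegularSOP (⊥ : Ideal (MvPolynomial σ K)) (l.map X) where
  isHomogeneous := Ideal.IsHomogeneous.bot _
  le_idealOfVars := bot_le
  isPosHomogeneous := List.forall_mem_map.2 fun i _ =>
    isPosHomogeneous_of_isHomogeneous_one (isHomogeneous_X K i)
  isWeaklyRegular := by
    rw [← Ideal.span_empty, ← Set.image_empty (X : σ → MvPolynomial σ K)]
    exact isWeaklyRegular_quotient_span_image_X ∅ hl (by simp)
  ringKrullDim_le := by
    classical
    let e := hl.getEquivOfForallMemList l hmem
    have : Finite σ := .of_equiv _ e
    rw [ringKrullDim_eq_of_ringEquiv (RingEquiv.quotientBot _),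
      MvPolynomial.ringKrullDim_of_isNoetherianRing, ← Nat.card_congr e]
    simp

end SOP

section Chain

variable {K V : Type*} [Field K] {G : SimpleGraph V} {v w : V}

/-- The generator of the binomial edge ideal attached to the edge `{v, w}`, up to sign. -/
def edgeMinor (K : Type*) [Field K] {V : Type*} (v w : V) : MvPolynomial (V ⊕ V) K :=
  X (Sum.inl v) * X (Sum.inr w) - X (Sum.inl w) * X (Sum.inr v)

lemma isPosHomogeneous_edgeMinor (v w : V) : IsPosHomogeneous (edgeMinor K v w) :=
  ⟨1, ((isHomogeneous_X K _).mul (isHomogeneous_X K _)).sub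
    ((isHomogeneous_X K _).mul (isHomogeneous_X K _))⟩

lemma edgeMinor_mem_binomialEdgeIdeal (h : G.Adj v w) :
    edgeMinor K v w ∈ binomialEdgeIdeal K G :=
  Ideal.subset_span ⟨v, w, h, rfl⟩

lemma binomialEdgeIdeal_bot : binomialEdgeIdeal K (⊥ : SimpleGraph V) = ⊥ := by
  simp [binomialEdgeIdeal]

lemma binomialEdgeIdeal_sup (G H : SimpleGraph V) :
    binomialEdgeIdeal K (G ⊔ H) = binomialEdgeIdeal K G ⊔ binomialEdgeIdeal K H := by
  simp only [binomialEdgeIdeal, ← Ideal.span_union, SimpleGraph.sup_adj, or_and_right, exists_or]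
  rfl

lemma binomialEdgeIdeal_edge (v w : V) :
    binomialEdgeIdeal K (SimpleGraph.edge v w) = Ideal.span {edgeMinor K v w} := by
  refine le_antisymm (Ideal.span_le.2 ?_) ((Ideal.span_singleton_le_iff_mem _).2 ?_)
  · rintro _ ⟨i, j, hij, rfl⟩
    have hmem := Ideal.mem_span_singleton_self (edgeMinor K v w)
    obtain ⟨⟨rfl, rfl⟩ | ⟨rfl, rfl⟩, -⟩ := (SimpleGraph.edge_adj v w i j).1 hij
    · exact hmem
    · rwa [SetLike.mem_coe, ← neg_mem_iff, neg_sub]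
  · rcases eq_or_ne v w with rfl | hvw
    · simp [edgeMinor]
    · exact edgeMinor_mem_binomialEdgeIdeal (by simp [SimpleGraph.edge_adj, hvw])

/-- The graph whose edges join consecutive entries of a list; it is a path if the list has no
duplicates. -/
def chainGraph : List V → SimpleGraph V
  | [] => ⊥
  | [_] => ⊥
  | v :: w :: l => SimpleGraph.edge v w ⊔ chainGraph (w :: l)

variable {s t : V → V ⊕ V}

/-- The variables `s w`, `t w` for `w` in the list `l`, where `s` and `t` are the two families of
variables in either order. -/
def chainVars (K : Type*) [Field K] {V : Type*} (s t : V → V ⊕ V) (l : List V) :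
    List (MvPolynomial (V ⊕ V) K) :=
  l.flatMap fun w => [X (s w), X (t w)]

/-- The parameters on the binomial edge ideal of the path `v :: l` that are left over from the
variables `t v` and `chainVars K s t l`. -/
def chainParams (K : Type*) [Field K] {V : Type*} (s t : V → V ⊕ V) :
    V → List V → List (MvPolynomial (V ⊕ V) K)
  | v, [] => [X (t v)]
  | v, w :: l => (X (s w) - X (t v)) :: chainParams K s t w l

lemma IsRegularSOP.attach_chain [Finite V] {l : List V} {L : List (MvPolynomial (V ⊕ V) K)}
    (hst : ∀ v w, binomialEdgeIdeal K (SimpleGraph.edge v w) =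
      Ideal.span {X (s v) * X (t w) - X (s w) * X (t v)})
    (h : IsRegularSOP (binomialEdgeIdeal K G) (X (t v) :: chainVars K s t l ++ L)) :
    IsRegularSOP (binomialEdgeIdeal K (G ⊔ chainGraph (v :: l))) (chainParams K s t v l ++ L) := by
  induction l generalizing G v L with
  | nil => simpa [chainGraph, chainParams, chainVars] using h
  | cons w l ih =>
    have hattach := h.attach (isHomogeneous_X K (s v)) (isHomogeneous_X K _)
      (isHomogeneous_X K _) (isHomogeneous_X K _)
    rw [mul_comm (X (t v)), ← hst, ← binomialEdgeIdeal_sup] at hattach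
    rw [chainGraph, ← sup_assoc]
    refine (ih (L := (X (s w) - X (t v)) :: L) (hattach.perm ?_)).perm List.perm_middle
    exact (List.Perm.swap _ _ _).trans (List.perm_middle.symm.cons _)

lemma isRegularSOP_bot_chainVars {l : List V} (hl : l.Nodup) (hmem : ∀ v, v ∈ l) :
    IsRegularSOP (binomialEdgeIdeal K (⊥ : SimpleGraph V)) (chainVars K Sum.inl Sum.inr l) := by
  have hvars : chainVars K Sum.inl Sum.inr l = (l.flatMap fun w => [.inl w, .inr w]).map X := by
    simp [chainVars, List.map_flatMap]
  rw [binomialEdgeIdeal_bot, hvars]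
  refine isRegularSOP_bot (List.nodup_flatMap.2 ⟨by simp, ?_⟩) (by simpa using hmem)
  exact hl.imp fun hab => by simp [hab.symm]

lemma chainVars_perm (l : List V) :
    (chainVars K Sum.inr Sum.inl l).Perm (chainVars K Sum.inl Sum.inr l) :=
  List.Perm.flatMap_left _ fun _ _ => .swap _ _ _

end Chain

section Duality

lemma mem_of_mul_mem_of_dual_families {K A ι : Type*} [CommRing K] [CommRing A] [Algebra K A]
    [Finite ι] [DecidableEq ι] {I J : Ideal A} {c : A} (φ : A →ₗ[K] K) (hφ : ∀ p ∈ I, φ p = 0)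
    (hJ : ∀ q ∈ J, q * c ∈ I) {v w : ι → A}
    (hv : Submodule.span K (Set.range fun i => Ideal.Quotient.mkₐ K J (v i)) = ⊤)
    (hvw : ∀ i j, φ (v i * w j * c) = if i = j then 1 else 0) {g : A} (hg : g * c ∈ I) :
    g ∈ J := by
  have := Fintype.ofFinite ι
  obtain ⟨k, hk⟩ := (Submodule.mem_span_range_iff_exists_fun K).1
    (hv.ge (Submodule.mem_top (x := Ideal.Quotient.mkₐ K J g)))
  have hgk : g - ∑ i, k i • v i ∈ J := by
    rw [← Ideal.Quotient.mk_eq_mk_iff_sub_mem, ← Ideal.Quotient.mkₐ_eq_mk K, ← hk]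
    simp
  have hsum : (∑ i, k i • v i) * c ∈ I := by
    simpa [sub_mul] using sub_mem hg (hJ _ hgk)
  have hk0 : k = 0 := by
    ext j
    calc k j = φ (∑ i, k i • (v i * w j * c)) := by simp [hvw]
      _ = φ (w j * ((∑ i, k i • v i) * c)) := by
        simp only [Finset.sum_mul, Finset.mul_sum, smul_mul_assoc, mul_smul_comm, mul_left_comm,
          mul_assoc]
      _ = 0 := hφ _ (I.mul_mem_left _ hsum)
  simpa [hk0] using hgk

lemma eq_top_of_one_mem_of_X_mul_mem {K σ : Type*} [CommRing K] {I : Ideal (MvPolynomial σ K)}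
    {N : Submodule K (MvPolynomial σ K ⧸ I)} (h1 : 1 ∈ N)
    (hX : ∀ i, ∀ p ∈ N, Ideal.Quotient.mk I (X i) * p ∈ N) : N = ⊤ := by
  refine eq_top_iff.2 fun p _ => ?_
  obtain ⟨p, rfl⟩ := Ideal.Quotient.mk_surjective p
  induction p using MvPolynomial.induction_on with
  | C k => exact (Algebra.algebraMap_eq_smul_one (A := MvPolynomial σ K ⧸ I) k) ▸ N.smul_mem k h1
  | add p q hp hq => rw [map_add]; exact N.add_mem (hp trivial) (hq trivial)
  | mul_X p i hp => rw [mul_comm, map_mul]; exact hX i _ (hp trivial)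

end Duality

section Socle

/-- The twelve words in the variables `z₀, …, z₄` whose monomials form a basis of the Artinian
algebra presented by `ColonRelations`. They are ordered in such a way that `Fin.rev` takes each word
to the dual one for the pairing in `socleFunctional_standardWord`. -/
def standardWord : Fin 12 → List (Fin 5) :=
  ![[], [0], [1], [2], [3], [4], [0, 2], [0, 3], [0, 4], [1, 4], [2, 4], [0, 2, 4]]

/-- The relations to which the generators of `pathColon` reduce modulo `pathParams`, where only five
variables `z₀, …, z₄` are left. The vanishing products `z i * z j` are listed by their index
pairs. -/
structure ColonRelations {B : Type*} [CommRing B] (z : Fin 5 → B) : Prop where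
  mul_eq_zero : ∀ p ∈ [(0, 0), (0, 1), (1, 2), (1, 3), (2, 2), (2, 3), (3, 4), (4, 4)],
    z p.1 * z p.2 = 0
  one_mul_one : z 1 * z 1 = z 0 * z 2
  three_mul_three : z 3 * z 3 = z 2 * z 4

/-- The index of the standard word representing the product of a variable with a standard word, or
`none` if that product vanishes. -/
def mulStandardWord : Fin 5 → Fin 12 → Option (Fin 12)
  | 0, 0 => some 1 | 0, 3 => some 6 | 0, 4 => some 7 | 0, 5 => some 8 | 0, 10 => some 11
  | 1, 0 => some 2 | 1, 2 => some 6 | 1, 5 => some 9 | 1, 9 => some 11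
  | 2, 0 => some 3 | 2, 1 => some 6 | 2, 5 => some 10 | 2, 8 => some 11
  | 3, 0 => some 4 | 3, 1 => some 7 | 3, 4 => some 10 | 3, 7 => some 11
  | 4, 0 => some 5 | 4, 1 => some 8 | 4, 2 => some 9 | 4, 3 => some 10 | 4, 6 => some 11
  | _, _ => none

lemma ColonRelations.mul_standardWord {B : Type*} [CommRing B] {z : Fin 5 → B}
    (hz : ColonRelations z) (k : Fin 5) (i : Fin 12) :
    z k * ((standardWord i).map z).prod =
      (mulStandardWord k i).elim 0 fun j => ((standardWord j).map z).prod := by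
  obtain ⟨h, h₁, h₃⟩ := hz
  simp only [List.forall_mem_cons, List.not_mem_nil, IsEmpty.forall_iff, implies_true,
    and_true] at h
  fin_cases k <;> fin_cases i <;> simp [standardWord, mulStandardWord] <;> grind

/-- The monomial with exponent `e` generates the socle of `K[z₀, …, z₄] ⧸ pathRelations K`. The
relations are homogeneous for the degree and for the weight in which `z i` has weight `i`, so such a
monomial has the degree `5` and the weight `10` of `z₀z₁z₂z₃z₄`, and neither `z₀²` nor `z₄²` divides
it. -/
def IsSocleExponent (e : Fin 5 → ℕ) : Prop :=
  ∑ i, e i = 5 ∧ ∑ i, i.val * e i = 10 ∧ e 0 ≤ 1 ∧ e 4 ≤ 1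

instance : DecidablePred IsSocleExponent := fun e => by unfold IsSocleExponent; infer_instance

/-- The linear form on `K[z₀, …, z₄]` that takes the value `1` on the monomials generating the socle
modulo `pathRelations K` and `0` on all other monomials. -/
def socleFunctional (K : Type*) [CommRing K] : MvPolynomial (Fin 5) K →ₗ[K] K :=
  (basisMonomials (Fin 5) K).constr K fun e => if IsSocleExponent e then 1 else 0

variable {K : Type*} [CommRing K]

lemma socleFunctional_monomial (e : Fin 5 →₀ ℕ) :
    socleFunctional K (monomial e 1) = if IsSocleExponent e then 1 else 0 := by
  simpa [socleFunctional] using (basisMonomials (Fin 5) K).constr_basis K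
    (fun e => if IsSocleExponent e then (1 : K) else 0) e

lemma map_X_prod (l : List (Fin 5)) :
    (l.map X).prod = monomial (Multiset.toFinsupp (l : Multiset (Fin 5))) (1 : K) := by
  induction l with
  | nil => simp
  | cons i l ih =>
    rw [List.map_cons, List.prod_cons, ih, ← Multiset.cons_coe, ← Multiset.singleton_add,
      map_add, Multiset.toFinsupp_singleton, X, monomial_mul, one_mul]

lemma socleFunctional_map_X_prod (l : List (Fin 5)) :
    socleFunctional K (l.map X).prod = if IsSocleExponent (l.count ·) then 1 else 0 := by
  have hcount : ⇑(Multiset.toFinsupp (l : Multiset (Fin 5))) = (l.count ·) := by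
    ext
    simp
  rw [map_X_prod, socleFunctional_monomial, hcount]

lemma isSocleExponent_standardWord : ∀ i j : Fin 12,
    (if IsSocleExponent ((standardWord i ++ standardWord j.rev ++ [1, 3]).count ·)
      then 1 else 0) -
    (if IsSocleExponent ((standardWord i ++ standardWord j.rev ++ [0, 4]).count ·)
      then 1 else 0) =
    if i = j then (1 : ℤ) else 0 := by
  decide

lemma socleFunctional_standardWord (i j : Fin 12) :
    socleFunctional K (((standardWord i).map X).prod * ((standardWord j.rev).map X).prod *
      (X 1 * X 3 - X 0 * X 4)) = if i = j then 1 else 0 := by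
  have hword (w : List (Fin 5)) :
      socleFunctional K (((standardWord i).map X).prod * ((standardWord j.rev).map X).prod *
        (w.map X).prod) =
      if IsSocleExponent ((standardWord i ++ standardWord j.rev ++ w).count ·) then 1 else 0 := by
    rw [← List.prod_append, ← List.map_append, ← List.prod_append, ← List.map_append,
      socleFunctional_map_X_prod]
  have h13 := hword [1, 3]
  have h04 := hword [0, 4]
  simp only [List.map_cons, List.map_nil, List.prod_cons, List.prod_nil, mul_one] at h13 h04
  rw [mul_sub, map_sub, h13, h04]
  exact_mod_cast congrArg (Int.cast : ℤ → K) (isSocleExponent_standardWord i j)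

/-- The ideal to which the binomial edge ideal of a path on six vertices reduces modulo
`pathParams`. -/
def pathRelations (K : Type*) [CommRing K] : Ideal (MvPolynomial (Fin 5) K) :=
  Ideal.span {X 0 * X 0, X 1 * X 1 - X 0 * X 2, X 2 * X 2 - X 1 * X 3, X 3 * X 3 - X 2 * X 4,
    X 4 * X 4}

lemma eq_zero_of_mem_span_of_monomial_mul {σ M : Type*} [AddCommGroup M] [Module K M]
    {φ : MvPolynomial σ K →ₗ[K] M} {s : Set (MvPolynomial σ K)}
    (hs : ∀ p ∈ s, ∀ e, φ (monomial e 1 * p) = 0) {p : MvPolynomial σ K}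
    (hp : p ∈ Ideal.span s) : φ p = 0 := by
  suffices ∀ h, φ (h * p) = 0 by simpa using this 1
  induction hp using Submodule.span_induction with
  | mem p hp =>
    have hφ : φ ∘ₗ LinearMap.mulRight K p = 0 :=
      (basisMonomials σ K).ext fun e => by simpa using hs p hp e
    exact LinearMap.congr_fun hφ
  | zero => simp
  | add p q _ _ hp hq => exact fun h => by rw [mul_add, map_add, hp, hq, add_zero]
  | smul a p _ hp => exact fun h => by rw [smul_eq_mul, ← mul_assoc, hp]

lemma socleFunctional_eq_zero {p : MvPolynomial (Fin 5) K} (hp : p ∈ pathRelations K) :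
    socleFunctional K p = 0 := by
  refine eq_zero_of_mem_span_of_monomial_mul ?_ hp
  simp only [Set.forall_mem_insert, Set.mem_singleton_iff, forall_eq, X, mul_sub, monomial_mul,
    one_mul, map_sub, socleFunctional_monomial, sub_eq_zero]
  refine ⟨fun e => if_neg ?_, fun e => if_congr ?_ rfl rfl, fun e => if_congr ?_ rfl rfl,
    fun e => if_congr ?_ rfl rfl, fun e => if_neg ?_⟩ <;>
    simp [IsSocleExponent, Fin.sum_univ_five] <;> omega

end Socle

section Chord

variable {K V : Type*} [Field K] {m : Fin 6 → V} {T : List V}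

lemma binomialEdgeIdeal_chainGraph_ofFn {n : ℕ} (m : Fin (n + 1) → V) :
    binomialEdgeIdeal K (chainGraph (List.ofFn m)) =
      Ideal.span (Set.range fun k : Fin n => edgeMinor K (m k.castSucc) (m k.succ)) := by
  induction n with
  | zero => simp [chainGraph, binomialEdgeIdeal_bot]
  | succ n ih =>
    rw [List.ofFn_succ, List.ofFn_succ, chainGraph, binomialEdgeIdeal_sup,
      binomialEdgeIdeal_edge, ← List.ofFn_succ (f := fun i => m i.succ), ih, ← Ideal.span_union,
      Set.singleton_union, Fin.range_fin_succ]
    rfl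

lemma isHomogeneous_binomialEdgeIdeal (G : SimpleGraph V) :
    (binomialEdgeIdeal K G).IsHomogeneous (homogeneousSubmodule (V ⊕ V) K) :=
  isHomogeneous_span_of_isPosHomogeneous fun _ ⟨i, j, _, h⟩ => h ▸ isPosHomogeneous_edgeMinor i j

/-- The ideal quotient of the binomial edge ideal of the path `m 0, …, m 5` by the minor of its
chord `{m 1, m 4}`, given by generators. -/
def pathColon (K : Type*) [Field K] {V : Type*} (m : Fin 6 → V) :
    Ideal (MvPolynomial (V ⊕ V) K) :=
  binomialEdgeIdeal K (chainGraph (List.ofFn m)) ⊔ Ideal.span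
    {X (.inl (m 2)) * X (.inl (m 3)), X (.inl (m 2)) * X (.inr (m 3)),
      X (.inr (m 2)) * X (.inl (m 3)), X (.inr (m 2)) * X (.inr (m 3)),
      edgeMinor K (m 0) (m 2), edgeMinor K (m 3) (m 5)}

lemma isHomogeneous_pathColon (m : Fin 6 → V) :
    (pathColon K m).IsHomogeneous (homogeneousSubmodule (V ⊕ V) K) := by
  have hX (i j : V ⊕ V) : IsPosHomogeneous (X i * X j : MvPolynomial (V ⊕ V) K) :=
    ⟨1, (isHomogeneous_X K i).mul (isHomogeneous_X K j)⟩
  refine (isHomogeneous_binomialEdgeIdeal _).sup (isHomogeneous_span_of_isPosHomogeneous ?_)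
  simp [hX, isPosHomogeneous_edgeMinor]

lemma mul_chord_eq_zero_of_path {A : Type*} [CommRing A] {x y : Fin 6 → A}
    (h : ∀ k : Fin 5, x k.castSucc * y k.succ = x k.succ * y k.castSucc) :
    x 2 * x 3 * (x 4 * y 1 - x 1 * y 4) = 0 ∧ x 2 * y 3 * (x 4 * y 1 - x 1 * y 4) = 0 ∧
    y 2 * x 3 * (x 4 * y 1 - x 1 * y 4) = 0 ∧ y 2 * y 3 * (x 4 * y 1 - x 1 * y 4) = 0 ∧
    (x 0 * y 2 - x 2 * y 0) * (x 4 * y 1 - x 1 * y 4) = 0 ∧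
    (x 3 * y 5 - x 5 * y 3) * (x 4 * y 1 - x 1 * y 4) = 0 := by
  have h₀ : x 0 * y 1 = x 1 * y 0 := h 0
  have h₁ : x 1 * y 2 = x 2 * y 1 := h 1
  have h₂ : x 2 * y 3 = x 3 * y 2 := h 2
  have h₃ : x 3 * y 4 = x 4 * y 3 := h 3
  have h₄ : x 4 * y 5 = x 5 * y 4 := h 4
  refine ⟨?_, ?_, ?_, ?_, ?_, ?_⟩
  · linear_combination -(x 1 * x 2 * h₃ + x 1 * x 4 * h₂ + x 3 * x 4 * h₁)
  · linear_combination -(x 1 * y 4 * h₂ + x 3 * y 4 * h₁ + y 1 * x 2 * h₃)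
  · linear_combination -(x 3 * y 4 * h₁ + y 1 * x 2 * h₃ + y 1 * x 4 * h₂)
  · linear_combination -(y 3 * y 4 * h₁ + y 1 * y 4 * h₂ + y 1 * y 2 * h₃)
  · linear_combination -(y 4 * (x 0 * h₁ + x 2 * h₀) - x 4 * (y 2 * h₀ + y 0 * h₁))
  · linear_combination -(x 1 * (y 5 * h₃ + y 3 * h₄) - y 1 * (x 3 * h₄ + x 5 * h₃))

lemma mk_path_relation {I : Ideal (MvPolynomial (V ⊕ V) K)}
    (hI : binomialEdgeIdeal K (chainGraph (List.ofFn m)) ≤ I) (k : Fin 5) :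
    Ideal.Quotient.mk I (X (.inl (m k.castSucc))) * Ideal.Quotient.mk I (X (.inr (m k.succ))) =
      Ideal.Quotient.mk I (X (.inl (m k.succ))) *
        Ideal.Quotient.mk I (X (.inr (m k.castSucc))) := by
  rw [← map_mul, ← map_mul, Ideal.Quotient.mk_eq_mk_iff_sub_mem]
  rw [binomialEdgeIdeal_chainGraph_ofFn] at hI
  exact hI (Ideal.subset_span ⟨k, rfl⟩)

lemma mul_edgeMinor_mem_of_mem_pathColon {g : MvPolynomial (V ⊕ V) K} (hg : g ∈ pathColon K m) :
    g * edgeMinor K (m 4) (m 1) ∈ binomialEdgeIdeal K (chainGraph (List.ofFn m)) := by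
  set I := binomialEdgeIdeal K (chainGraph (List.ofFn m)) with hI
  suffices pathColon K m ≤ I.colon {edgeMinor K (m 4) (m 1)} from
    Submodule.mem_colon_singleton.1 (this hg)
  refine sup_le (fun p hp => Submodule.mem_colon_singleton.2 (I.mul_mem_right _ hp))
    (Ideal.span_le.2 ?_)
  have hrel := mul_chord_eq_zero_of_path (x := fun k => Ideal.Quotient.mk I (X (.inl (m k))))
    (y := fun k => Ideal.Quotient.mk I (X (.inr (m k)))) (mk_path_relation hI.ge)
  simp only [Set.insert_subset_iff, Set.singleton_subset_iff, SetLike.mem_coe,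
    Submodule.mem_colon_singleton, smul_eq_mul]
  simpa only [← Ideal.Quotient.eq_zero_iff_mem, edgeMinor, map_mul, map_sub] using hrel

/-- A system of parameters on the binomial edge ideal of the path `m 0, …, m 5`, where `T` lists
the remaining vertices: the differences `x_{m (k + 1)} - y_{m k}`, the variables `x_{m 0}` and
`y_{m 5}`, and the variables of `T`. -/
def pathParams (K : Type*) [Field K] {V : Type*} (m : Fin 6 → V) (T : List V) :
    List (MvPolynomial (V ⊕ V) K) :=
  chainParams K .inl .inr (m 0) [m 1, m 2, m 3, m 4, m 5] ++
    X (.inl (m 0)) :: chainVars K .inl .inr T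

lemma forall_mem_pathParams {P : MvPolynomial (V ⊕ V) K → Prop} :
    (∀ p ∈ pathParams K m T, P p) ↔
      (∀ k : Fin 5, P (X (.inl (m k.succ)) - X (.inr (m k.castSucc)))) ∧ P (X (.inl (m 0))) ∧
        P (X (.inr (m 5))) ∧ ∀ v ∈ T, P (X (.inl v)) ∧ P (X (.inr v)) := by
  have hvars : (∀ p ∈ chainVars K .inl .inr T, P p) ↔
      ∀ v ∈ T, P (X (.inl v)) ∧ P (X (.inr v)) := by
    simp only [chainVars, List.forall_mem_flatMap, List.forall_mem_cons, List.not_mem_nil,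
      IsEmpty.forall_iff, implies_true, and_true]
  simp only [pathParams, chainParams, List.forall_mem_append, List.forall_mem_cons, hvars,
    List.not_mem_nil, IsEmpty.forall_iff, implies_true, and_true, Fin.forall_fin_succ]
  exact ⟨fun ⟨⟨h₁, h₂, h₃, h₄, h₅, hy⟩, hx, hT⟩ => ⟨⟨h₁, h₂, h₃, h₄, h₅⟩, hx, hy, hT⟩,
    fun ⟨⟨h₁, h₂, h₃, h₄, h₅⟩, hx, hy, hT⟩ => ⟨⟨h₁, h₂, h₃, h₄, h₅, hy⟩, hx, hT⟩⟩

/-- The substitution that kills `pathParams` and takes both `y_{m k}` and `x_{m (k + 1)}` to the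
variable `z k`. -/
def sectionHom (K : Type*) [Field K] {V : Type*} (m : Fin 6 → V) :
    MvPolynomial (V ⊕ V) K →ₐ[K] MvPolynomial (Fin 5) K :=
  aeval (Sum.elim (Function.extend m ![0, X 0, X 1, X 2, X 3, X 4] 0)
    (Function.extend m ![X 0, X 1, X 2, X 3, X 4, 0] 0))

lemma sectionHom_X_inl (hm : Function.Injective m) (k : Fin 6) :
    sectionHom K m (X (.inl (m k))) = ![0, X 0, X 1, X 2, X 3, X 4] k := by
  simp [sectionHom, hm.extend_apply]

lemma sectionHom_X_inr (hm : Function.Injective m) (k : Fin 6) :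
    sectionHom K m (X (.inr (m k))) = ![X 0, X 1, X 2, X 3, X 4, 0] k := by
  simp [sectionHom, hm.extend_apply]

lemma sectionHom_mem_pathRelations (hm : Function.Injective m) (hT : ∀ v ∈ T, v ∉ Set.range m)
    {p : MvPolynomial (V ⊕ V) K}
    (hp : p ∈ binomialEdgeIdeal K (chainGraph (List.ofFn m)) ⊔ Ideal.ofList (pathParams K m T)) :
    sectionHom K m p ∈ pathRelations K := by
  suffices _ ≤ (pathRelations K).comap (sectionHom K m) from this hp
  rw [binomialEdgeIdeal_chainGraph_ofFn]
  refine sup_le (Ideal.span_le.2 ?_) (Ideal.span_le.2 fun p hp => ?_)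
  · rintro _ ⟨k, rfl⟩
    rw [SetLike.mem_coe, Ideal.mem_comap, ← neg_mem_iff]
    refine Ideal.subset_span ?_
    fin_cases k <;> simp [edgeMinor, sectionHom_X_inl hm, sectionHom_X_inr hm]
  · rw [SetLike.mem_coe, Ideal.mem_comap]
    suffices sectionHom K m p = 0 by simp [this]
    revert p
    refine forall_mem_pathParams.2 ⟨fun k => ?_, ?_, ?_, fun v hv => ?_⟩
    · fin_cases k <;> simp [sectionHom_X_inl hm, sectionHom_X_inr hm]
    · simp [sectionHom_X_inl hm]
    · simp [sectionHom_X_inr hm]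
    · have hv' : ¬ ∃ k, m k = v := hT v hv
      simp [sectionHom, Function.extend_apply' _ _ _ hv']

lemma colonRelations_of_path {A : Type*} [CommRing A] {x y : Fin 6 → A}
    (hx : ∀ k : Fin 5, x k.succ = y k.castSucc) (hx₀ : x 0 = 0) (hy₅ : y 5 = 0)
    (h : ∀ k : Fin 5, x k.castSucc * y k.succ = x k.succ * y k.castSucc)
    (hcolon : x 2 * x 3 = 0 ∧ x 2 * y 3 = 0 ∧ y 2 * x 3 = 0 ∧ y 2 * y 3 = 0 ∧
      x 0 * y 2 - x 2 * y 0 = 0 ∧ x 3 * y 5 - x 5 * y 3 = 0) :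
    ColonRelations fun k : Fin 5 => y k.castSucc := by
  have h₀ : x 0 * y 1 = x 1 * y 0 := h 0
  have h₁ : x 1 * y 2 = x 2 * y 1 := h 1
  have h₃ : x 3 * y 4 = x 4 * y 3 := h 3
  have h₄ : x 4 * y 5 = x 5 * y 4 := h 4
  have x₁ : x 1 = y 0 := hx 0
  have x₂ : x 2 = y 1 := hx 1
  have x₃ : x 3 = y 2 := hx 2
  have x₄ : x 4 = y 3 := hx 3
  have x₅ : x 5 = y 4 := hx 4
  simp only [x₁, x₂, x₃, x₄, x₅, hx₀, hy₅] at *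
  refine ⟨?_, ?_, ?_⟩
  · simp only [List.forall_mem_cons, List.not_mem_nil, IsEmpty.forall_iff, implies_true, and_true]
    grind
  · grind
  · grind

lemma colonRelations_mk {I : Ideal (MvPolynomial (V ⊕ V) K)} (hm : pathColon K m ≤ I)
    (hI : Ideal.ofList (pathParams K m T) ≤ I) :
    ColonRelations fun k : Fin 5 => Ideal.Quotient.mk I (X (.inr (m k.castSucc))) := by
  obtain ⟨hx, hx₀, hy₅, -⟩ := forall_mem_pathParams.1
    fun p hp => Ideal.Quotient.eq_zero_iff_mem.2 (hI (Ideal.subset_span hp))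
  simp only [map_sub, sub_eq_zero] at hx
  have hgen := Ideal.span_le.1 (le_sup_right.trans hm)
  refine colonRelations_of_path (x := fun k => Ideal.Quotient.mk I (X (.inl (m k))))
    (y := fun k => Ideal.Quotient.mk I (X (.inr (m k)))) hx hx₀ hy₅
    (mk_path_relation (le_sup_left.trans hm)) ?_
  simpa [Set.insert_subset_iff, ← Ideal.Quotient.eq_zero_iff_mem, edgeMinor] using hgen

lemma mk_X_eq_zero_or_exists_eq {I : Ideal (MvPolynomial (V ⊕ V) K)}
    (hT : ∀ v, v ∈ T ∨ v ∈ Set.range m) (hI : Ideal.ofList (pathParams K m T) ≤ I) (i : V ⊕ V) :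
    Ideal.Quotient.mk I (X i) = 0 ∨
      ∃ k : Fin 5, Ideal.Quotient.mk I (X i) = Ideal.Quotient.mk I (X (.inr (m k.castSucc))) := by
  obtain ⟨hx, hx₀, hy₅, hvars⟩ := forall_mem_pathParams.1
    fun p hp => Ideal.Quotient.eq_zero_iff_mem.2 (hI (Ideal.subset_span hp))
  simp only [map_sub, sub_eq_zero] at hx
  rcases i with v | v <;> rcases hT v with hv | ⟨k, rfl⟩
  · exact .inl (hvars v hv).1
  · cases k using Fin.cases with
    | zero => exact .inl hx₀
    | succ k => exact .inr ⟨k, hx k⟩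
  · exact .inl (hvars v hv).2
  · cases k using Fin.lastCases with
    | last => exact .inl hy₅
    | cast k => exact .inr ⟨k, rfl⟩

lemma ColonRelations.span_standardWord_eq_top {σ : Type*} {I : Ideal (MvPolynomial σ K)}
    {z : Fin 5 → MvPolynomial σ K ⧸ I} (hz : ColonRelations z)
    (hX : ∀ i, Ideal.Quotient.mk I (X i) = 0 ∨ ∃ k, Ideal.Quotient.mk I (X i) = z k) :
    Submodule.span K (Set.range fun j => ((standardWord j).map z).prod) = ⊤ := by
  refine eq_top_of_one_mem_of_X_mul_mem (Submodule.subset_span ⟨0, by simp [standardWord]⟩)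
    fun i p hp => ?_
  rcases hX i with hi | ⟨k, hk⟩
  · simp [hi]
  rw [hk]
  induction hp using Submodule.span_induction with
  | mem p hp =>
    obtain ⟨j, rfl⟩ := hp
    simp only [hz.mul_standardWord]
    cases mulStandardWord k j with
    | none => exact zero_mem _
    | some j => exact Submodule.subset_span ⟨j, rfl⟩
  | zero => simp
  | add p q _ _ hp hq => rw [mul_add]; exact add_mem hp hq
  | smul a p _ hp => rw [mul_smul_comm]; exact Submodule.smul_mem _ a hp

lemma mem_pathColon_of_mul_edgeMinor_mem (hm : Function.Injective m)
    (hT : ∀ v, v ∈ T ↔ v ∉ Set.range m) {g : MvPolynomial (V ⊕ V) K}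
    (hg : g * edgeMinor K (m 4) (m 1) ∈ binomialEdgeIdeal K (chainGraph (List.ofFn m)) ⊔
      Ideal.ofList (pathParams K m T)) :
    g ∈ pathColon K m ⊔ Ideal.ofList (pathParams K m T) := by
  let z : Fin 5 → MvPolynomial (V ⊕ V) K := fun k => X (.inr (m k.castSucc))
  have hz : ColonRelations fun k => Ideal.Quotient.mk
      (pathColon K m ⊔ Ideal.ofList (pathParams K m T)) (z k) :=
    colonRelations_mk le_sup_left le_sup_right
  have hspan := hz.span_standardWord_eq_top (mk_X_eq_zero_or_exists_eq
    (fun v => (em (v ∈ Set.range m)).symm.imp_left (hT v).2) le_sup_right)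
  refine mem_of_mul_mem_of_dual_families (socleFunctional K ∘ₗ (sectionHom K m).toLinearMap)
    (fun p hp => socleFunctional_eq_zero (sectionHom_mem_pathRelations hm (fun v => (hT v).1) hp))
    (fun q hq => ?_) (v := fun i => ((standardWord i).map z).prod)
    (w := fun i => ((standardWord i.rev).map z).prod) ?_ (fun i j => ?_) hg
  · obtain ⟨a, ha, b, hb, rfl⟩ := Submodule.mem_sup.1 hq
    rw [add_mul]
    exact Submodule.add_mem_sup (mul_edgeMinor_mem_of_mem_pathColon ha) (Ideal.mul_mem_right _ _ hb)
  · simpa [map_list_prod, Function.comp_def] using hspan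
  · have hzX (k) : sectionHom K m (z k) = X k := by
      fin_cases k <;> simp [z, sectionHom_X_inr hm]
    rw [← socleFunctional_standardWord]
    have hminor : sectionHom K m (edgeMinor K (m 4) (m 1)) = X 1 * X 3 - X 0 * X 4 := by
      simp [edgeMinor, sectionHom_X_inl hm, sectionHom_X_inr hm, mul_comm]
    simp only [LinearMap.comp_apply, AlgHom.toLinearMap_apply, map_mul, map_list_prod, List.map_map,
      Function.comp_def, hzX, hminor]

end Chord

section Assembly

variable {K V : Type*} [Field K]

lemma binomialEdgeIdeal_edge_swap (v w : V) : binomialEdgeIdeal K (SimpleGraph.edge v w) =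
    Ideal.span {X (.inr v) * X (.inl w) - X (.inr w) * X (.inl v)} := by
  rw [SimpleGraph.edge_comm, binomialEdgeIdeal_edge, edgeMinor]
  simp only [mul_comm]

lemma pathParams_append_perm (m : Fin 6 → V) (U W : List V) :
    (pathParams K m (U ++ W)).Perm (X (.inr (m 5)) :: chainVars K .inl .inr W ++
      (X (.inl (m 0)) :: chainVars K .inr .inl U ++
        [X (.inl (m 1)) - X (.inr (m 0)), X (.inl (m 2)) - X (.inr (m 1)),
          X (.inl (m 3)) - X (.inr (m 2)), X (.inl (m 4)) - X (.inr (m 3)),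
          X (.inl (m 5)) - X (.inr (m 4))])) := by
  classical
  refine List.perm_iff_count.2 fun p => ?_
  have happend : chainVars K .inl .inr (U ++ W) =
      chainVars K .inl .inr U ++ chainVars K .inl .inr W := List.flatMap_append
  simp only [pathParams, chainParams, happend, List.count_append, List.count_cons,
    (chainVars_perm U).count_eq]
  ring

variable [Finite V] {m : Fin 6 → V} {T : List V}

lemma isRegularSOP_chainGraph_ofFn (hm : Function.Injective m) (hT : T.Nodup)
    (hmT : ∀ v, v ∈ T ↔ v ∉ Set.range m) :
    IsRegularSOP (binomialEdgeIdeal K (chainGraph (List.ofFn m))) (pathParams K m T) := by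
  have hlist : List.ofFn m = [m 0, m 1, m 2, m 3, m 4, m 5] := by simp [List.ofFn_succ]
  have hvars : IsRegularSOP (binomialEdgeIdeal K ⊥) (chainVars K .inl .inr (List.ofFn m ++ T)) := by
    refine isRegularSOP_bot_chainVars (List.nodup_append'.2 ⟨List.nodup_ofFn.2 hm, hT, ?_⟩) ?_
    · exact fun v hv hv' => (hmT v).1 hv' ((List.mem_ofFn' _ _).1 hv)
    · exact fun v => List.mem_append.2
        ((em (v ∈ Set.range m)).imp (List.mem_ofFn' _ _).2 (hmT v).2)
  have hperm : (chainVars K .inl .inr (List.ofFn m ++ T)).Perm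
      (X (.inr (m 0)) :: chainVars K .inl .inr [m 1, m 2, m 3, m 4, m 5] ++
        X (.inl (m 0)) :: chainVars K .inl .inr T) := by
    rw [hlist]
    exact (List.Perm.swap _ _ _).trans
      ((List.perm_middle (l₁ := chainVars K .inl .inr [m 1, m 2, m 3, m 4, m 5])).symm.cons _)
  simpa only [hlist, bot_sup_eq, pathParams] using
    (hvars.perm hperm).attach_chain binomialEdgeIdeal_edge

lemma isRegularSOP_chainGraph_ofFn_sup_edge (hm : Function.Injective m) (hT : T.Nodup)
    (hmT : ∀ v, v ∈ T ↔ v ∉ Set.range m) :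
    IsRegularSOP (binomialEdgeIdeal K (chainGraph (List.ofFn m) ⊔ SimpleGraph.edge (m 4) (m 1)))
      (pathParams K m T) := by
  rw [binomialEdgeIdeal_sup, binomialEdgeIdeal_edge]
  exact (isRegularSOP_chainGraph_ofFn hm hT hmT).sup_span_singleton_of_colon
    (isHomogeneous_pathColon m) (isPosHomogeneous_edgeMinor _ _)
    (fun _ => mul_edgeMinor_mem_of_mem_pathColon)
    fun _ => mem_pathColon_of_mul_edgeMinor_mem hm hmT

theorem isCMQuot_binomialEdgeIdeal_chainGraph_ofFn_sup_edge_sup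
    (hm : Function.Injective m) {U W : List V} (hT : (U ++ W).Nodup)
    (hmT : ∀ v, v ∈ U ++ W ↔ v ∉ Set.range m) :
    IsCMQuot (binomialEdgeIdeal K (chainGraph (List.ofFn m) ⊔ SimpleGraph.edge (m 4) (m 1) ⊔
      chainGraph (m 5 :: W) ⊔ chainGraph (m 0 :: U))) := by
  have hcore := isRegularSOP_chainGraph_ofFn_sup_edge (K := K) hm hT hmT
  have hright := (hcore.perm (pathParams_append_perm m U W)).attach_chain binomialEdgeIdeal_edge
  have hleft := (hright.perm (List.perm_append_comm.trans (.of_eq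
    (List.append_assoc ..)))).attach_chain binomialEdgeIdeal_edge_swap
  exact hleft.isCMQuot

theorem isCMQuot_binomialEdgeIdeal_chainGraph_sup {u₁ u₂ u₃ v₁ v₂ v₃ : V} {U W : List V}
    (hnodup : (u₁ :: u₂ :: u₃ :: U ++ v₁ :: v₂ :: v₃ :: W).Nodup)
    (hmem : ∀ v, v ∈ u₁ :: u₂ :: u₃ :: U ++ v₁ :: v₂ :: v₃ :: W) :
    IsCMQuot (binomialEdgeIdeal K
      (chainGraph (u₁ :: u₂ :: u₃ :: U) ⊔ chainGraph (v₁ :: v₂ :: v₃ :: W) ⊔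
        SimpleGraph.edge u₁ v₁ ⊔ SimpleGraph.edge u₂ v₂)) := by
  let m : Fin 6 → V := ![u₃, u₂, u₁, v₁, v₂, v₃]
  have hlist : List.ofFn m = [u₃, u₂, u₁, v₁, v₂, v₃] := by simp [m, List.ofFn_succ]
  have hperm : (List.ofFn m ++ (U ++ W)).Perm (u₁ :: u₂ :: u₃ :: U ++ v₁ :: v₂ :: v₃ :: W) := by
    classical
    refine List.perm_iff_count.2 fun v => ?_
    simp only [hlist, List.count_append, List.count_cons, List.count_nil]
    ring
  obtain ⟨hm, hT, hdisj⟩ := List.nodup_append'.1 (hperm.nodup_iff.2 hnodup)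
  have hmT (v) : v ∈ U ++ W ↔ v ∉ Set.range m := by
    rw [← List.mem_ofFn']
    exact ⟨fun hv hv' => hdisj hv' hv,
      (List.mem_append.1 (hperm.mem_iff.2 (hmem v))).resolve_left⟩
  convert isCMQuot_binomialEdgeIdeal_chainGraph_ofFn_sup_edge_sup (K := K) (List.nodup_ofFn.1 hm)
    hT hmT using 2
  change _ = _ ⊔ SimpleGraph.edge v₂ u₂ ⊔ chainGraph (v₃ :: W) ⊔ chainGraph (u₃ :: U)
  simp only [hlist, chainGraph, sup_bot_eq, SimpleGraph.edge_comm u₃, SimpleGraph.edge_comm u₂ u₁,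
    SimpleGraph.edge_comm v₂ u₂]
  ac_rfl

end Assembly

section GraphG4

lemma chainGraph_ofFn_adj {V : Type*} {n : ℕ} {f : Fin (n + 1) → V} {v w : V} :
    (chainGraph (List.ofFn f)).Adj v w ↔
      ∃ k : Fin n, (SimpleGraph.edge (f k.castSucc) (f k.succ)).Adj v w := by
  induction n with
  | zero => simp [chainGraph]
  | succ n ih =>
    rw [List.ofFn_succ, List.ofFn_succ, chainGraph, SimpleGraph.sup_adj,
      ← List.ofFn_succ (f := fun i => f i.succ), ih, Fin.exists_fin_succ]
    rfl

lemma fin_succ_eq_iff {n : ℕ} {i j : Fin (n + 1)} :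
    i.val + 1 = j.val ↔ ∃ k : Fin n, k.castSucc = i ∧ k.succ = j := by
  refine ⟨fun h => ⟨⟨i, by omega⟩, rfl, Fin.ext h⟩, ?_⟩
  rintro ⟨k, rfl, rfl⟩
  rfl

lemma graphG4_eq (r s : ℕ) : graphG4 (r + 2) (s + 2) =
    chainGraph (List.ofFn Sum.inl) ⊔ chainGraph (List.ofFn Sum.inr) ⊔
      SimpleGraph.edge (Sum.inl 0) (Sum.inr 0) ⊔ SimpleGraph.edge (Sum.inl 1) (Sum.inr 1) := by
  have val_eq_one {n : ℕ} {i : Fin (n + 2)} : i.val = 1 ↔ i = 1 := by simp [Fin.ext_iff]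
  ext v w
  simp only [SimpleGraph.sup_adj, chainGraph_ofFn_adj, SimpleGraph.edge_adj]
  rcases v with v | v <;> rcases w with w | w <;>
    simp [graphG4, g4Rel, fin_succ_eq_iff, val_eq_one] <;>
    grind

end GraphG4

/-- For every graph `G` in the family `𝒢₄` (two paths of lengths
`r, s ≥ 3` joined by the edges `u_1—v_1` and `u_2—v_2`), the quotient `S/J_G` is
Cohen–Macaulay. -/
theorem isCMQuot_binomialEdgeIdeal_graphG4
    (K : Type*) [Field K] (r s : ℕ) (hr : 3 ≤ r) (hs : 3 ≤ s) :
    IsCMQuot (binomialEdgeIdeal K (graphG4 r s)) := by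
  obtain ⟨a, rfl⟩ := Nat.exists_eq_add_of_le' hr
  obtain ⟨b, rfl⟩ := Nat.exists_eq_add_of_le' hs
  rw [graphG4_eq]
  have hnodup : (List.ofFn Sum.inl ++ List.ofFn Sum.inr : List (Fin (a + 3) ⊕ Fin (b + 3))).Nodup :=
    List.nodup_append'.2 ⟨List.nodup_ofFn.2 Sum.inl_injective,
      List.nodup_ofFn.2 Sum.inr_injective, by simp [List.Disjoint]⟩
  have hmem (v : Fin (a + 3) ⊕ Fin (b + 3)) : v ∈ List.ofFn Sum.inl ++ List.ofFn Sum.inr := by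
    rcases v with v | v
    · exact List.mem_append_left _ (List.mem_ofFn.2 ⟨v, rfl⟩)
    · exact List.mem_append_right _ (List.mem_ofFn.2 ⟨v, rfl⟩)
  simp only [List.ofFn_succ] at hnodup hmem ⊢
  exact isCMQuot_binomialEdgeIdeal_chainGraph_sup hnodup hmem

end
end

section
/- If J_G is an unmixed almost complete intersection binomial edge ideal and G has c connected components, then exactly c − 1 of the connected components of G are path graphs and exactly one connected component is a unicyclic graph (a connected graph containing exactly one cycle, i.e., with as many edges as vertices). -/
open MvPolynomial

noncomputable section

/-- A graph is unicyclic if it is connected and contains exactly one cycle,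
i.e. it has as many edges as vertices. -/
def IsUnicyclic {V : Type*} (H : SimpleGraph V) : Prop :=
  H.Connected ∧ H.edgeSet.ncard = Nat.card V

/-!
The edge binomials are linearly independent quadrics, so `μ(J_G) = |E|`. If `T` is a set of
vertices, the prime generated by the variables at `T` and the binomials of all pairs of vertices
connected in `G - T` contains `J_G`; by Krull's height theorem applied to `T` and a spanning forest
of `G - T` its height is at most `n - c(G - T) + |T|`, where `n` is the number of vertices and `c`
counts connected components. For `T = ∅` it is a minimal prime of `J_G`, and deleting the edges of
a spanning forest one at a time gives a chain of primes showing that its height is exactly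
`n - c(G)`.

Unmixedness therefore gives `ht J_G = n - c(G)`, and the almost complete intersection property
becomes `|E| = n - c(G) + 1`. As a component with `m` vertices has at least `m - 1` edges, with
equality for trees only, one component is unicyclic and the others are trees. If `v` lies in a tree
component, all edges at `v` are bridges and `G - v` has `c(G) + deg v - 1` components, so that
`n - c(G) ≤ n - (c(G) + deg v - 1) + 1`, that is, `deg v ≤ 2`. A tree with all degrees at most two
is a path.
-/

section CommutativeAlgebra

lemma htI_eq_height {R : Type*} [CommRing R] (I : Ideal R) : htI I = I.height := by
  refine le_antisymm ?_ (le_iInf₂ fun P hIP => ?_)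
  · rw [Ideal.height_eq_inf_minimalPrimes]
    refine le_iInf₂ fun P hP => ?_
    have : P.IsPrime := hP.1.1
    exact (iInf₂_le (⟨P, this⟩ : PrimeSpectrum R) hP.1.2).trans_eq
      (PrimeSpectrum.height_eq_orderHeight _).symm
  · rw [← PrimeSpectrum.height_eq_orderHeight]
    exact Ideal.height_mono hIP

lemma mu_eq_spanFinrank {R : Type*} [CommRing R] (J : Ideal R) :
    mu J = Submodule.spanFinrank J := by
  by_cases hJ : J.FG
  · obtain ⟨s, hcard, hs⟩ := Submodule.FG.exists_span_finset_card_eq_spanFinrank hJ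
    refine le_antisymm (Nat.sInf_le ⟨s, hcard, hs⟩) (le_csInf ⟨_, s, rfl, hs⟩ ?_)
    rintro _ ⟨t, rfl, rfl⟩
    exact (Submodule.spanFinrank_span_le_ncard_of_finite t.finite_toSet).trans_eq
      (Set.ncard_coe_finset t)
  · have hempty : {k | ∃ s : Finset R, s.card = k ∧ Ideal.span (s : Set R) = J} = ∅ :=
      Set.eq_empty_of_forall_notMem fun _ ⟨s, _, hs⟩ => hJ ⟨s, hs⟩
    rw [mu, hempty, Nat.sInf_empty, Submodule.spanFinrank_of_not_fg hJ]

variable {σ R : Type*} [CommRing R]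

lemma homogeneousComponent_mul_of_mem_pow_idealOfVars {d : ℕ} (p : MvPolynomial σ R)
    {g : MvPolynomial σ R} (hg : g ∈ idealOfVars σ R ^ d) :
    homogeneousComponent d (p * g) = constantCoeff p • homogeneousComponent d g := by
  have hp : p - C (constantCoeff p) ∈ idealOfVars σ R := by
    rw [← pow_one (idealOfVars σ R), mem_pow_idealOfVars_iff']
    intro x hx
    obtain rfl : x = 0 := (Finsupp.degree_eq_zero_iff x).1 (by omega)
    simp [constantCoeff_eq]
  have hpg : homogeneousComponent d ((p - C (constantCoeff p)) * g) = 0 := by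
    have hmem := (mem_pow_idealOfVars_iff' (d + 1) _).1
      (pow_succ' (idealOfVars σ R) d ▸ Ideal.mul_mem_mul hp hg)
    ext x
    rw [coeff_homogeneousComponent, coeff_zero]
    split_ifs with hx
    · exact hmem x (by omega)
    · rfl
  rwa [sub_mul, map_sub, homogeneousComponent_C_mul, sub_eq_zero, ← smul_eq_C_mul] at hpg

lemma homogeneousComponent_mem_span_image {d : ℕ} {s : Set (MvPolynomial σ R)}
    (hs : s ⊆ ↑(idealOfVars σ R ^ d)) {g : MvPolynomial σ R} (hg : g ∈ Ideal.span s) :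
    homogeneousComponent d g ∈ Submodule.span R (homogeneousComponent d '' s) := by
  induction hg using Submodule.span_induction with
  | mem g hg => exact Submodule.subset_span ⟨g, hg, rfl⟩
  | zero => simp
  | add g h _ _ hg hh => rw [map_add]; exact add_mem hg hh
  | smul p g hg h =>
    rw [smul_eq_mul, homogeneousComponent_mul_of_mem_pow_idealOfVars p (Ideal.span_le.2 hs hg)]
    exact Submodule.smul_mem _ _ h

lemma spanFinrank_span_range_of_isHomogeneous [Nontrivial R] {ι : Type*} [Finite ι] {d : ℕ}
    {b : ι → MvPolynomial σ R} (hb : ∀ i, (b i).IsHomogeneous d) (hli : LinearIndependent R b) :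
    (Ideal.span (Set.range b)).spanFinrank = Nat.card ι := by
  classical
  have : Fintype ι := Fintype.ofFinite ι
  obtain ⟨s, hcard, hs⟩ := Submodule.FG.exists_span_finset_card_eq_spanFinrank
    (p := Ideal.span (Set.range b)) (Submodule.fg_span (Set.finite_range b))
  change Ideal.span (s : Set (MvPolynomial σ R)) = _ at hs
  have hpow : Ideal.span (Set.range b) ≤ idealOfVars σ R ^ d := by
    refine Ideal.span_le.2 ?_
    rintro _ ⟨i, rfl⟩
    exact (mem_pow_idealOfVars_iff' d _).2 fun x hx => (hb i).coeff_eq_zero hx.ne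
  have hsub : Set.range b ⊆
      Submodule.span R (s.image (homogeneousComponent d) : Set (MvPolynomial σ R)) := by
    rintro _ ⟨i, rfl⟩
    rw [← homogeneousComponent_eq_self (hb i), Finset.coe_image]
    refine homogeneousComponent_mem_span_image (fun g hg => hpow ?_) ?_
    · exact hs ▸ Ideal.subset_span hg
    · exact hs ▸ Ideal.subset_span ⟨i, rfl⟩
  apply le_antisymm
  · calc _ ≤ (Set.range b).ncard :=
        Submodule.spanFinrank_span_le_ncard_of_finite (Set.finite_range b)
      _ = Nat.card ι := by rw [← Nat.card_coe_set_eq, Nat.card_range_of_injective hli.injective]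
  · calc Nat.card ι ≤ (s.image (homogeneousComponent d)).card := by
          simpa using linearIndependent_le_span' b hli _ hsub
      _ ≤ s.card := Finset.card_image_le
      _ = _ := hcard

end CommutativeAlgebra

section EdgeBinomials

variable {K : Type*} [Field K] {V : Type*}

/-- The binomial `f_{ij} = x_i y_j - x_j y_i`, for an arbitrary pair of vertices. -/
def pairBinomial (K : Type*) [Field K] {V : Type*} (i j : V) : MvPolynomial (V ⊕ V) K :=
  X (Sum.inl i) * X (Sum.inr j) - X (Sum.inl j) * X (Sum.inr i)

lemma pairBinomial_swap (i j : V) : pairBinomial K j i = -pairBinomial K i j := by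
  rw [pairBinomial, pairBinomial, neg_sub]

lemma pairBinomial_isHomogeneous (i j : V) : (pairBinomial K i j).IsHomogeneous 2 :=
  ((isHomogeneous_X _ _).mul (isHomogeneous_X _ _)).sub
    ((isHomogeneous_X _ _).mul (isHomogeneous_X _ _))

lemma pairBinomial_mem_binomialEdgeIdeal {G : SimpleGraph V} {i j : V} (h : G.Adj i j) :
    pairBinomial K i j ∈ binomialEdgeIdeal K G :=
  Ideal.subset_span ⟨i, j, h, rfl⟩

lemma binomialEdgeIdeal_le_iff {G : SimpleGraph V} {I : Ideal (MvPolynomial (V ⊕ V) K)} :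
    binomialEdgeIdeal K G ≤ I ↔ ∀ i j, G.Adj i j → pairBinomial K i j ∈ I := by
  refine ⟨fun h i j hij => h (pairBinomial_mem_binomialEdgeIdeal hij), fun h => ?_⟩
  refine Ideal.span_le.2 ?_
  rintro _ ⟨i, j, hij, rfl⟩
  exact h i j hij

lemma binomialEdgeIdeal_mono {F G : SimpleGraph V} (h : F ≤ G) :
    binomialEdgeIdeal K F ≤ binomialEdgeIdeal K G :=
  binomialEdgeIdeal_le_iff.2 fun _ _ hij => pairBinomial_mem_binomialEdgeIdeal (h hij)

/-- The binomial of an unordered pair, with respect to an arbitrary choice of order; another choice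
would only change its sign. -/
def edgeBinomial (K : Type*) [Field K] {V : Type*} (e : Sym2 V) : MvPolynomial (V ⊕ V) K :=
  pairBinomial K e.out.1 e.out.2

lemma edgeBinomial_mk (i j : V) :
    edgeBinomial K s(i, j) = pairBinomial K i j ∨ edgeBinomial K s(i, j) = -pairBinomial K i j := by
  have hout : s((Quot.out s(i, j)).1, (Quot.out s(i, j)).2) = s(i, j) := Quot.out_eq _
  rw [edgeBinomial]
  rcases Sym2.eq_iff.1 hout with ⟨h₁, h₂⟩ | ⟨h₁, h₂⟩
  · exact .inl (by rw [h₁, h₂])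
  · exact .inr (by rw [h₁, h₂, pairBinomial_swap])

lemma edgeBinomial_mem_iff {I : Ideal (MvPolynomial (V ⊕ V) K)} {i j : V} :
    edgeBinomial K s(i, j) ∈ I ↔ pairBinomial K i j ∈ I := by
  rcases edgeBinomial_mk (K := K) i j with h | h
  · rw [h]
  · rw [h, neg_mem_iff]

lemma binomialEdgeIdeal_eq_span_range (G : SimpleGraph V) :
    binomialEdgeIdeal K G = Ideal.span (Set.range fun e : G.edgeSet => edgeBinomial K e.1) := by
  apply le_antisymm
  · exact binomialEdgeIdeal_le_iff.2 fun i j hij =>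
      edgeBinomial_mem_iff.1 (Ideal.subset_span ⟨⟨s(i, j), hij⟩, rfl⟩)
  · refine Ideal.span_le.2 ?_
    rintro _ ⟨⟨⟨i, j⟩, hij⟩, rfl⟩
    exact edgeBinomial_mem_iff.2 (pairBinomial_mem_binomialEdgeIdeal hij)

lemma single_inl_add_single_inr_inj {i j k l : V} :
    (Finsupp.single (Sum.inl i) 1 + Finsupp.single (Sum.inr j) 1 : V ⊕ V →₀ ℕ) =
      Finsupp.single (Sum.inl k) 1 + Finsupp.single (Sum.inr l) 1 ↔ i = k ∧ j = l := by
  classical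
  refine ⟨fun h => ⟨?_, ?_⟩, by rintro ⟨rfl, rfl⟩; rfl⟩
  · simpa [Finsupp.single_apply, eq_comm] using DFunLike.congr_fun h (Sum.inl i)
  · simpa [Finsupp.single_apply, eq_comm] using DFunLike.congr_fun h (Sum.inr j)

lemma coeff_pairBinomial [DecidableEq V] (i j k l : V) :
    coeff (Finsupp.single (Sum.inl i) 1 + Finsupp.single (Sum.inr j) 1) (pairBinomial K k l) =
      (if k = i ∧ l = j then 1 else 0) - if l = i ∧ k = j then 1 else 0 := by
  have hmonomial (a b : V) : (X (Sum.inl a) * X (Sum.inr b) : MvPolynomial (V ⊕ V) K) =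
      monomial (Finsupp.single (Sum.inl a) 1 + Finsupp.single (Sum.inr b) 1) 1 := by
    simp [X, monomial_mul]
  simp only [pairBinomial, coeff_sub, hmonomial, coeff_monomial, single_inl_add_single_inr_inj]

lemma linearIndependent_edgeBinomial (G : SimpleGraph V) :
    LinearIndependent K fun e : G.edgeSet => edgeBinomial K e.1 := by
  classical
  have hout (e : Sym2 V) : s(e.out.1, e.out.2) = e := Quot.out_eq _
  refine .of_pairwise_dual_eq_zero_one _ (fun e => lcoeff K
    (Finsupp.single (Sum.inl (Quot.out e.1).1) 1 + Finsupp.single (Sum.inr (Quot.out e.1).2) 1))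
    (fun e e' hne => ?_) fun e => ?_
  · have hpair : s((Quot.out e'.1).1, (Quot.out e'.1).2) ≠
        s((Quot.out e.1).1, (Quot.out e.1).2) := by
      rw [hout, hout]
      exact fun h => hne (Subtype.ext h.symm)
    rw [ne_eq, Sym2.eq_iff, not_or] at hpair
    change coeff _ (pairBinomial K _ _) = 0
    rw [coeff_pairBinomial, if_neg hpair.1,
      if_neg fun h => hpair.2 h.symm, sub_zero]
  · have hne : (Quot.out e.1).1 ≠ (Quot.out e.1).2 := by
      have hadj : s((Quot.out e.1).1, (Quot.out e.1).2) ∈ G.edgeSet := (hout e.1).symm ▸ e.2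
      exact G.ne_of_adj hadj
    rw [lcoeff_apply, edgeBinomial, coeff_pairBinomial, if_pos ⟨rfl, rfl⟩,
      if_neg fun h => hne h.2, sub_zero]

lemma spanFinrank_binomialEdgeIdeal [Finite V] (G : SimpleGraph V) :
    (binomialEdgeIdeal K G).spanFinrank = G.edgeSet.ncard := by
  rw [binomialEdgeIdeal_eq_span_range, ← Nat.card_coe_set_eq]
  exact spanFinrank_span_range_of_isHomogeneous (fun _ => pairBinomial_isHomogeneous _ _)
    (linearIndependent_edgeBinomial G)

end EdgeBinomials

section ComponentPrimes

lemma div_eq_div_of_reachable {V L : Type*} [Field L] {F : SimpleGraph V} {x y : V → L}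
    (hx : ∀ i j, F.Adj i j → x i ≠ 0) (hxy : ∀ i j, F.Adj i j → x i * y j = x j * y i) {i j : V}
    (hij : F.Reachable i j) : y i / x i = y j / x j := by
  obtain ⟨w⟩ := hij
  induction w with
  | nil => rfl
  | @cons i j _ hadj _ ih =>
    rw [← ih, div_eq_div_iff (hx i j hadj) (hx j i hadj.symm), mul_comm, ← hxy i j hadj, mul_comm]

variable {K : Type*} [Field K] {V : Type*} [DecidableEq V] {T : Finset V} {F G : SimpleGraph V}

/-- The parametrisation `x_i ↦ t_i`, `y_i ↦ t_i b_c` of the component prime of `T` and `F`, where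
`c` is the connected component of `i` in `F`, with `x_i, y_i ↦ 0` for `i ∈ T`. -/
def componentHom (K : Type*) [Field K] (T : Finset V) (F : SimpleGraph V) :
    MvPolynomial (V ⊕ V) K →ₐ[K] MvPolynomial (V ⊕ F.ConnectedComponent) K :=
  aeval (Sum.elim (fun i => if i ∈ T then 0 else X (Sum.inl i))
    (fun i => if i ∈ T then 0 else X (Sum.inl i) * X (Sum.inr (F.connectedComponentMk i))))

@[simp]
lemma componentHom_inl (i : V) :
    componentHom K T F (X (Sum.inl i)) = if i ∈ T then 0 else X (Sum.inl i) := by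
  simp [componentHom]

@[simp]
lemma componentHom_inr (i : V) :
    componentHom K T F (X (Sum.inr i)) =
      if i ∈ T then 0 else X (Sum.inl i) * X (Sum.inr (F.connectedComponentMk i)) := by
  simp [componentHom]

lemma componentHom_pairBinomial {i j : V} (hi : i ∉ T) (hj : j ∉ T) :
    componentHom K T F (pairBinomial K i j) = X (Sum.inl i) * X (Sum.inl j) *
      (X (Sum.inr (F.connectedComponentMk j)) - X (Sum.inr (F.connectedComponentMk i))) := by
  simp only [pairBinomial, map_sub, map_mul, componentHom_inl, componentHom_inr, hi, hj, if_false]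
  ring

/-- The prime generated by the variables at `T` and the binomials of all pairs of vertices outside
`T` connected in `F`. For `F = G - T` this is the prime `P_T(G)` of the literature; it is encoded
as the kernel of its parametrisation, which makes primality automatic. -/
def componentPrime (K : Type*) [Field K] (T : Finset V) (F : SimpleGraph V) :
    Ideal (MvPolynomial (V ⊕ V) K) :=
  RingHom.ker (componentHom K T F)

instance : (componentPrime K T F).IsPrime :=
  RingHom.ker_isPrime _

lemma mem_componentPrime {p : MvPolynomial (V ⊕ V) K} :
    p ∈ componentPrime K T F ↔ componentHom K T F p = 0 :=
  RingHom.mem_ker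

lemma X_inl_mem_componentPrime_iff {i : V} : X (Sum.inl i) ∈ componentPrime K T F ↔ i ∈ T := by
  simp [mem_componentPrime]

lemma X_inr_mem_componentPrime_iff {i : V} : X (Sum.inr i) ∈ componentPrime K T F ↔ i ∈ T := by
  simp [mem_componentPrime]

lemma pairBinomial_mem_componentPrime_iff {i j : V} :
    pairBinomial K i j ∈ componentPrime K T F ↔ i ∈ T ∨ j ∈ T ∨ F.Reachable i j := by
  by_cases hi : i ∈ T
  · simp [mem_componentPrime, pairBinomial, hi]
  by_cases hj : j ∈ T
  · simp [mem_componentPrime, pairBinomial, hj]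
  rw [mem_componentPrime, componentHom_pairBinomial hi hj]
  simp [hi, hj, sub_eq_zero, X_ne_zero, SimpleGraph.reachable_comm]

lemma binomialEdgeIdeal_le_componentPrime_iff :
    binomialEdgeIdeal K G ≤ componentPrime K T F ↔
      ∀ i j, G.Adj i j → i ∉ T → j ∉ T → F.Reachable i j := by
  simp only [binomialEdgeIdeal_le_iff, pairBinomial_mem_componentPrime_iff, or_iff_not_imp_left]

lemma exists_comp_componentHom_eq {L : Type*} [Field L] [Algebra K L]
    {θ : MvPolynomial (V ⊕ V) K →ₐ[K] L} (hT : ∀ i ∈ T, ∀ j, ¬ F.Adj i j)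
    (hθF : ∀ i j, F.Adj i j → θ (pairBinomial K i j) = 0)
    (hθT : ∀ v ∈ T.disjSum T, θ (X v) = 0) (hθx : ∀ i ∉ T, θ (X (Sum.inl i)) ≠ 0) :
    ∃ ψ : MvPolynomial (V ⊕ F.ConnectedComponent) K →ₐ[K] L, ψ.comp (componentHom K T F) = θ := by
  let x (i : V) : L := θ (X (Sum.inl i))
  let y (i : V) : L := θ (X (Sum.inr i))
  have hx {i j : V} (hij : F.Adj i j) : x i ≠ 0 := hθx i fun hi => hT i hi j hij
  have hxy {i j : V} (hij : F.Adj i j) : x i * y j = x j * y i := by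
    simpa [pairBinomial, sub_eq_zero] using hθF i j hij
  have hslope (i : V) : y i / x i =
      y (F.connectedComponentMk i).out / x (F.connectedComponentMk i).out :=
    div_eq_div_of_reachable (fun _ _ => hx) (fun _ _ => hxy)
      (SimpleGraph.ConnectedComponent.eq.1 (Quot.out_eq (F.connectedComponentMk i)).symm)
  refine ⟨aeval (Sum.elim x fun c => y c.out / x c.out), ?_⟩
  ext (i | i)
  · by_cases hi : i ∈ T
    · simp [hi, hθT (Sum.inl i) (by simpa)]
    · simp [hi, x]
  · by_cases hi : i ∈ T
    · simp [hi, hθT (Sum.inr i) (by simpa)]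
    · simp only [AlgHom.comp_apply, componentHom_inr, hi, if_false, map_mul, aeval_X,
        Sum.elim_inl, Sum.elim_inr, ← hslope]
      exact mul_div_cancel₀ _ (hθx i hi)

lemma componentPrime_le_of_le (hT : ∀ i ∈ T, ∀ j, ¬ F.Adj i j)
    {P : Ideal (MvPolynomial (V ⊕ V) K)} [P.IsPrime] (hPF : binomialEdgeIdeal K F ≤ P)
    (hPT : ∀ v ∈ T.disjSum T, X v ∈ P) (hP : P ≤ componentPrime K T F) :
    componentPrime K T F ≤ P := by
  let θ : MvPolynomial (V ⊕ V) K →ₐ[K] P.ResidueField :=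
    IsScalarTower.toAlgHom K (MvPolynomial (V ⊕ V) K) P.ResidueField
  have hθ (p : MvPolynomial (V ⊕ V) K) : θ p = 0 ↔ p ∈ P := Ideal.algebraMap_residueField_eq_zero
  obtain ⟨ψ, hψ⟩ := exists_comp_componentHom_eq (θ := θ) hT
    (fun i j hij => (hθ _).2 (binomialEdgeIdeal_le_iff.1 hPF i j hij))
    (fun v hv => (hθ _).2 (hPT v hv))
    fun i hi h => hi (X_inl_mem_componentPrime_iff.1 (hP ((hθ _).1 h)))
  intro p hp
  rw [← hθ, ← hψ, AlgHom.comp_apply, mem_componentPrime.1 hp, map_zero]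

lemma componentPrime_mem_minimalPrimes (hT : ∀ i ∈ T, ∀ j, ¬ F.Adj i j)
    {I : Ideal (MvPolynomial (V ⊕ V) K)} (hIF : binomialEdgeIdeal K F ≤ I)
    (hIT : ∀ v ∈ T.disjSum T, X v ∈ I) (hI : I ≤ componentPrime K T F) :
    componentPrime K T F ∈ I.minimalPrimes :=
  ⟨⟨inferInstance, hI⟩, fun _ ⟨_, hIP⟩ hP =>
    componentPrime_le_of_le hT (hIF.trans hIP) (fun v hv => hIP (hIT v hv)) hP⟩

lemma componentPrime_mono {F' : SimpleGraph V} (h : F' ≤ F) :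
    componentPrime K T F' ≤ componentPrime K T F := by
  have hcomp : (rename (Sum.map id (SimpleGraph.ConnectedComponent.map
      (SimpleGraph.Hom.ofLE h)))).comp (componentHom K T F') = componentHom K T F := by
    ext (i | i) <;> by_cases hi : i ∈ T <;> simp [hi]
  intro p hp
  rw [mem_componentPrime] at hp ⊢
  rw [← hcomp, AlgHom.comp_apply, hp, map_zero]

lemma componentPrime_lt {F' : SimpleGraph V} (h : F' ≤ F) {i j : V} (hi : i ∉ T) (hj : j ∉ T)
    (hF : F.Reachable i j) (hF' : ¬ F'.Reachable i j) :
    componentPrime K T F' < componentPrime K T F := by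
  refine lt_of_le_not_ge (componentPrime_mono h) fun hle => ?_
  have hmem : pairBinomial K i j ∈ componentPrime K T F' :=
    hle (pairBinomial_mem_componentPrime_iff.2 (.inr (.inr hF)))
  simp [pairBinomial_mem_componentPrime_iff, hi, hj, hF'] at hmem

lemma height_componentPrime_le [Finite V] (hT : ∀ i ∈ T, ∀ j, ¬ F.Adj i j) :
    (componentPrime K T F).height ≤ (F.edgeSet.ncard + 2 * T.card : ℕ) := by
  let s : Set (MvPolynomial (V ⊕ V) K) :=
    (Set.range fun e : F.edgeSet => edgeBinomial K e.1) ∪ X '' (T.disjSum T : Set (V ⊕ V))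
  have hspan : Ideal.span s = binomialEdgeIdeal K F ⊔ Ideal.span (X '' (T.disjSum T : Set _)) := by
    rw [binomialEdgeIdeal_eq_span_range, Ideal.span_union]
  have hmin : componentPrime K T F ∈ (Ideal.span s).minimalPrimes := by
    refine componentPrime_mem_minimalPrimes hT (hspan ▸ le_sup_left)
      (fun v hv => Ideal.subset_span (.inr ⟨v, hv, rfl⟩)) ?_
    rw [hspan, sup_le_iff, binomialEdgeIdeal_le_componentPrime_iff, Ideal.span_le,
      Set.image_subset_iff]
    refine ⟨fun i j hij _ _ => hij.reachable, ?_⟩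
    rintro (i | i) hi
    · exact X_inl_mem_componentPrime_iff.2 (by simpa using hi)
    · exact X_inr_mem_componentPrime_iff.2 (by simpa using hi)
  have hcard : s.ncard ≤ F.edgeSet.ncard + 2 * T.card := by
    refine (Set.ncard_union_le _ _).trans (add_le_add ?_ ?_)
    · rw [← Set.image_eq_range]
      exact Set.ncard_image_le
    · refine (Set.ncard_image_le (Finset.finite_toSet _)).trans_eq ?_
      rw [Set.ncard_coe_finset, Finset.card_disjSum, two_mul]
  exact (Ideal.height_le_card_of_mem_minimalPrimes_span (Set.toFinite s) hmin).trans
    (Nat.cast_le.2 hcard)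

lemma card_edgeSet_le_height_componentPrime [Finite V] (hF : F.IsAcyclic) :
    (F.edgeSet.ncard : ℕ∞) ≤ (componentPrime K ∅ F).height := by
  induction hk : F.edgeSet.ncard generalizing F with
  | zero => simp
  | succ k ih =>
    obtain ⟨⟨i, j⟩, he⟩ : F.edgeSet.Nonempty := (Set.ncard_pos).1 (by omega)
    have hij : F.Adj i j := he
    have hle := F.deleteEdges_le {s(i, j)}
    have hcard : (F.deleteEdges {s(i, j)}).edgeSet.ncard = k := by
      rw [SimpleGraph.edgeSet_deleteEdges,
        Set.ncard_sdiff_singleton_of_mem (F.mem_edgeSet.2 hij), hk, Nat.add_sub_cancel]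
    have hbridge := SimpleGraph.isAcyclic_iff_forall_adj_isBridge.1 hF hij
    have hlt : componentPrime K ∅ (F.deleteEdges {s(i, j)}) < componentPrime K ∅ F :=
      componentPrime_lt hle (Finset.notMem_empty i) (Finset.notMem_empty j) hij.reachable hbridge
    calc ((k + 1 : ℕ) : ℕ∞) = k + 1 := Nat.cast_succ k
      _ ≤ (componentPrime K ∅ (F.deleteEdges {s(i, j)})).height + 1 := by
        gcongr
        exact ih (hF.anti hle) hcard
      _ ≤ (componentPrime K ∅ F).height := Ideal.height_add_one_le_of_lt_of_isPrime hlt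

end ComponentPrimes

section PathGraphs

open SimpleGraph

variable {V : Type*} {H : SimpleGraph V} {r : V}

lemma exists_adj_dist_eq_of_dist_eq_succ (hH : H.Connected) {a : V} {d : ℕ}
    (ha : H.dist a r = d + 1) : ∃ u, H.Adj a u ∧ H.dist u r = d := by
  obtain ⟨w, hw⟩ := hH.exists_walk_length_eq_dist a r
  cases w with
  | nil => simp at ha
  | @cons _ u _ hau p =>
    refine ⟨u, hau, ?_⟩
    have hp := dist_le p
    have htri := hH.dist_triangle (u := a) (v := u) (w := r)
    rw [dist_eq_one_iff_adj.2 hau] at htri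
    rw [Walk.length_cons] at hw
    omega

lemma dist_lt_card [Finite V] (hH : H.Connected) (u v : V) : H.dist u v < Nat.card V := by
  have : Fintype V := Fintype.ofFinite V
  obtain ⟨p, hp, hlength⟩ := hH.exists_path_of_dist u v
  rw [← hlength, Nat.card_eq_fintype_card]
  exact hp.length_lt

lemma injective_dist_of_ncard_neighborSet_le [Finite V] (hH : H.Connected)
    (hdeg : ∀ v, (H.neighborSet v).ncard ≤ 2) (hr : (H.neighborSet r).ncard ≤ 1) :
    (H.dist · r).Injective := by
  suffices h : ∀ d a b, H.dist a r = d → H.dist b r = d → a = b from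
    fun a b hab => h _ a b hab rfl
  intro d
  induction d with
  | zero =>
    intro a b ha hb
    rw [hH.dist_eq_zero_iff.1 ha, hH.dist_eq_zero_iff.1 hb]
  | succ d ih =>
    intro a b ha hb
    obtain ⟨u, hau, hu⟩ := exists_adj_dist_eq_of_dist_eq_succ hH ha
    obtain ⟨u', hbu, hu'⟩ := exists_adj_dist_eq_of_dist_eq_succ hH hb
    obtain rfl := ih u u' hu hu'
    cases d with
    | zero =>
      obtain rfl := hH.dist_eq_zero_iff.1 hu
      exact (Set.ncard_le_one_iff (Set.toFinite _)).1 hr hau.symm hbu.symm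
    | succ d =>
      obtain ⟨w, huw, hw⟩ := exists_adj_dist_eq_of_dist_eq_succ hH hu
      by_contra hab
      refine (hdeg u).not_gt ((Set.two_lt_ncard (Set.toFinite _)).2
        ⟨a, hau.symm, b, hbu.symm, w, huw, hab, ?_, ?_⟩) <;>
      · rintro rfl
        omega

lemma isPathGraph_of_injective_dist [Finite V] (hH : H.Connected)
    (hinj : (H.dist · r).Injective) : IsPathGraph H := by
  let e : V → Fin (Nat.card V) := fun a => ⟨H.dist a r, dist_lt_card hH a r⟩
  have he : e.Bijective := (Nat.bijective_iff_injective_and_card e).2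
    ⟨fun a b hab => hinj (Fin.ext_iff.1 hab), by simp⟩
  have hadj {a b : V} (hab : H.dist a r + 1 = H.dist b r) : H.Adj a b := by
    obtain ⟨u, hbu, hu⟩ := exists_adj_dist_eq_of_dist_eq_succ hH hab.symm
    exact hinj hu ▸ hbu.symm
  refine ⟨_, Equiv.ofBijective e he, fun a b => ⟨fun hab => ?_, ?_⟩⟩
  · change H.dist a r + 1 = H.dist b r ∨ H.dist b r + 1 = H.dist a r
    have hne : H.dist a r ≠ H.dist b r := hinj.ne hab.ne
    have hdiff := hab.diff_dist_adj (u := r)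
    rw [dist_comm (u := r), dist_comm (u := r)] at hdiff
    omega
  · rintro (h | h)
    · exact hadj h
    · exact (hadj h).symm

lemma isPathGraph_of_isTree [Finite V] (hH : H.IsTree)
    (hdeg : ∀ v, (H.neighborSet v).ncard ≤ 2) : IsPathGraph H := by
  classical
  obtain ⟨r, hr⟩ : ∃ r, (H.neighborSet r).ncard ≤ 1 := by
    have : Fintype V := Fintype.ofFinite V
    rcases subsingleton_or_nontrivial V with hV | hV
    · exact ⟨hH.connected.nonempty.some, Set.ncard_le_one_of_subsingleton _⟩
    · obtain ⟨r, hr⟩ := hH.exists_vert_degree_one_of_nontrivial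
      refine ⟨r, ?_⟩
      rw [← Nat.card_coe_set_eq, Nat.card_eq_fintype_card, card_neighborSet_eq_degree, hr]
  exact isPathGraph_of_injective_dist hH.connected
    (injective_dist_of_ncard_neighborSet_le hH.connected hdeg hr)

end PathGraphs

section ComponentCounts

open SimpleGraph

variable {V : Type*} {G : SimpleGraph V}

lemma sum_card_connectedComponent [Finite V] [Fintype G.ConnectedComponent] :
    ∑ c : G.ConnectedComponent, Nat.card c = Nat.card V := by
  rw [← Nat.card_sigma]
  exact Nat.card_congr (Equiv.sigmaFiberEquiv G.connectedComponentMk)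

lemma bijective_sigma_edgeSet_toSimpleGraph :
    Function.Bijective fun e : Σ c : G.ConnectedComponent, c.toSimpleGraph.edgeSet =>
      e.1.toSimpleGraph_hom.mapEdgeSet e.2 := by
  constructor
  · rintro ⟨c, ⟨⟨⟨i, hi⟩, ⟨j, hj⟩⟩, he⟩⟩ ⟨c', ⟨⟨⟨i', hi'⟩, ⟨j', hj'⟩⟩, he'⟩⟩ h
    have hij : s(i, j) = s(i', j') := congrArg Subtype.val h
    rcases Sym2.eq_iff.1 hij with ⟨rfl, rfl⟩ | ⟨rfl, rfl⟩
    · obtain rfl : c = c' := hi.symm.trans hi'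
      rfl
    · obtain rfl : c = c' := hi.symm.trans hj'
      simp only [Sigma.mk.injEq, heq_eq_eq, true_and]
      exact Subtype.ext Sym2.eq_swap
  · rintro ⟨⟨i, j⟩, hij⟩
    exact ⟨⟨G.connectedComponentMk i, s(⟨i, rfl⟩, ⟨j, ConnectedComponent.eq.2
      (G.mem_edgeSet.1 hij).symm.reachable⟩), hij⟩, rfl⟩

lemma sum_card_edgeSet_toSimpleGraph [Finite V] [Fintype G.ConnectedComponent] :
    ∑ c : G.ConnectedComponent, Nat.card c.toSimpleGraph.edgeSet = Nat.card G.edgeSet := by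
  rw [← Nat.card_sigma]
  exact Nat.card_congr (Equiv.ofBijective _ bijective_sigma_edgeSet_toSimpleGraph)

lemma sum_card_edgeSet_toSimpleGraph_add_one [Finite V] [Fintype G.ConnectedComponent] :
    ∑ c : G.ConnectedComponent, (Nat.card c.toSimpleGraph.edgeSet + 1) =
      G.edgeSet.ncard + Nat.card G.ConnectedComponent := by
  rw [Finset.sum_add_distrib, sum_card_edgeSet_toSimpleGraph, Nat.card_coe_set_eq]
  simp

lemma card_edgeSet_add_card_connectedComponent_of_isAcyclic [Finite V] (hG : G.IsAcyclic) :
    G.edgeSet.ncard + Nat.card G.ConnectedComponent = Nat.card V := by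
  have : Fintype G.ConnectedComponent := Fintype.ofFinite _
  rw [← sum_card_edgeSet_toSimpleGraph_add_one, ← sum_card_connectedComponent (G := G)]
  exact Finset.sum_congr rfl fun c _ =>
    (isTree_iff_connected_and_card.1 (hG.isTree_connectedComponent c)).2

lemma exists_isAcyclic_card_edgeSet_add_card_connectedComponent [Finite V] (G : SimpleGraph V) :
    ∃ F ≤ G, F.IsAcyclic ∧ F.Reachable = G.Reachable ∧
      F.edgeSet.ncard + Nat.card G.ConnectedComponent = Nat.card V := by
  obtain ⟨F, hFG, hF, hreach⟩ := G.exists_isAcyclic_reachable_eq_le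
  have hcard : Nat.card F.ConnectedComponent = Nat.card G.ConnectedComponent :=
    congrArg (fun r => Nat.card (Quot r)) hreach
  exact ⟨F, hFG, hF, hreach, hcard ▸ card_edgeSet_add_card_connectedComponent_of_isAcyclic hF⟩

lemma exists_isUnicyclic_and_isTree_of_card_edgeSet [Finite V]
    (h : G.edgeSet.ncard + Nat.card G.ConnectedComponent = Nat.card V + 1) :
    ∃ c₀ : G.ConnectedComponent, IsUnicyclic c₀.toSimpleGraph ∧
      ∀ c ≠ c₀, c.toSimpleGraph.IsTree := by
  classical
  have : Fintype G.ConnectedComponent := Fintype.ofFinite _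
  let v (c : G.ConnectedComponent) : ℕ := Nat.card c
  let e (c : G.ConnectedComponent) : ℕ := Nat.card c.toSimpleGraph.edgeSet
  have hle (c : G.ConnectedComponent) : v c ≤ e c + 1 :=
    c.connected_toSimpleGraph.card_vert_le_card_edgeSet_add_one
  have hsum : ∑ c, (e c + 1) = ∑ c, v c + 1 := by
    rw [sum_card_edgeSet_toSimpleGraph_add_one, sum_card_connectedComponent, h]
  obtain ⟨c₀, -, hc₀⟩ : ∃ c₀ ∈ Finset.univ, v c₀ < e c₀ + 1 :=
    Finset.exists_lt_of_sum_lt (hsum ▸ Nat.lt_succ_self _)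
  have hrest : ∑ c ∈ Finset.univ.erase c₀, v c ≤ ∑ c ∈ Finset.univ.erase c₀, (e c + 1) :=
    Finset.sum_le_sum fun c _ => hle c
  rw [← Finset.add_sum_erase _ v (Finset.mem_univ c₀),
    ← Finset.add_sum_erase _ (fun c => e c + 1) (Finset.mem_univ c₀)] at hsum
  refine ⟨c₀, ⟨c₀.connected_toSimpleGraph, ?_⟩, fun c hc => ?_⟩
  · rw [← Nat.card_coe_set_eq]
    change e c₀ = v c₀
    omega
  · have htree := (Finset.sum_eq_sum_iff_of_le fun c _ => hle c).1 (by omega) c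
      (Finset.mem_erase.2 ⟨hc, Finset.mem_univ c⟩)
    exact isTree_iff_connected_and_card.2 ⟨c.connected_toSimpleGraph, htree.symm⟩

lemma isBridge_of_isAcyclic_toSimpleGraph {i j : V} (hij : G.Adj i j)
    (h : (G.connectedComponentMk i).toSimpleGraph.IsAcyclic) : G.IsBridge s(i, j) := by
  classical
  let c := G.connectedComponentMk i
  have hj : j ∈ c.supp := ConnectedComponent.eq.2 hij.symm.reachable
  have hadj : c.toSimpleGraph.Adj ⟨i, rfl⟩ ⟨j, hj⟩ := hij
  rw [isBridge_iff_forall_walk_mem_edges]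
  intro p
  have hp : ∀ w ∈ p.support, w ∈ c.supp := fun w hw =>
    ConnectedComponent.eq.2 (p.takeUntil w hw).reachable.symm
  have hmem := isBridge_iff_forall_walk_mem_edges.1
    (isAcyclic_iff_forall_adj_isBridge.1 h hadj) (p.induce c.supp hp)
  have hedges : p.edges = (p.induce c.supp hp).edges.map (Sym2.map Subtype.val) :=
    (congrArg Walk.edges (p.map_induce hp)).symm.trans (Walk.edges_map _ _)
  exact hedges ▸ List.mem_map_of_mem (f := Sym2.map Subtype.val) hmem

lemma card_connectedComponent_lt_of_isBridge [Finite V] {e : Sym2 V} (he : e ∈ G.edgeSet)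
    (hbridge : G.IsBridge e) :
    Nat.card G.ConnectedComponent < Nat.card (G.deleteEdges {e}).ConnectedComponent := by
  obtain ⟨i, j⟩ := e
  have hle := G.deleteEdges_le {s(i, j)}
  refine (ConnectedComponent.card_le_card_of_le hle).lt_of_ne fun hcard => hbridge ?_
  have hbij := (Nat.bijective_iff_surjective_and_card _).2
    ⟨ConnectedComponent.surjective_map_ofLE hle, hcard.symm⟩
  exact ConnectedComponent.eq.1 (hbij.injective
    (ConnectedComponent.eq.2 (G.mem_edgeSet.1 he).reachable))

lemma card_connectedComponent_add_ncard_le_of_isBridge [Finite V] {s : Set (Sym2 V)}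
    (hs : s ⊆ G.edgeSet) (hbridge : ∀ e ∈ s, G.IsBridge e) :
    Nat.card G.ConnectedComponent + s.ncard ≤ Nat.card (G.deleteEdges s).ConnectedComponent := by
  induction s, s.toFinite using Set.Finite.induction_on with
  | empty => simp
  | @insert e s he _ ih =>
    have ih := ih (fun _ h => hs (.inr h)) (fun _ h => hbridge _ (.inr h))
    have hlt := card_connectedComponent_lt_of_isBridge (G := G.deleteEdges s) (e := e)
      (by simpa using ⟨hs (.inl rfl), he⟩)
      ((hbridge e (.inl rfl)).anti (G.deleteEdges_le s))
    rw [deleteEdges_deleteEdges, Set.union_singleton] at hlt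
    rw [Set.ncard_insert_of_notMem he]
    omega

lemma card_connectedComponent_add_ncard_neighborSet_le [Finite V] {v : V}
    (h : ∀ w, G.Adj v w → G.IsBridge s(v, w)) :
    Nat.card G.ConnectedComponent + (G.neighborSet v).ncard ≤
      Nat.card (G.deleteIncidenceSet v).ConnectedComponent := by
  classical
  have hbridge : ∀ e ∈ G.incidenceSet v, G.IsBridge e := by
    rintro e ⟨he, hv⟩
    obtain ⟨w, rfl⟩ := hv
    exact h w he
  have hcard : (G.incidenceSet v).ncard = (G.neighborSet v).ncard :=
    Nat.card_congr (G.incidenceSetEquivNeighborSet v)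
  rw [← hcard]
  exact card_connectedComponent_add_ncard_le_of_isBridge (G.incidenceSet_subset v) hbridge

end ComponentCounts

section HeightBounds

variable {K : Type*} [Field K] {V : Type*} [Finite V] {G : SimpleGraph V}

/-- The typical `H` is `G` with the edges at `T` deleted. The vertices of `T` then count among its
components, so that `n - c(H) + 2|T|` is the usual bound `n - c(G - T) + |T|`. -/
lemma height_binomialEdgeIdeal_add_card_connectedComponent_le {T : Finset V} {H : SimpleGraph V}
    (hT : ∀ i ∈ T, ∀ j, ¬ H.Adj i j)
    (hH : ∀ i j, G.Adj i j → i ∉ T → j ∉ T → H.Reachable i j) :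
    (binomialEdgeIdeal K G).height + Nat.card H.ConnectedComponent ≤
      (Nat.card V + 2 * T.card : ℕ) := by
  classical
  obtain ⟨F, hFH, -, hreach, hcard⟩ := exists_isAcyclic_card_edgeSet_add_card_connectedComponent H
  have hle : binomialEdgeIdeal K G ≤ componentPrime K T F :=
    binomialEdgeIdeal_le_componentPrime_iff.2 (hreach ▸ hH)
  calc (binomialEdgeIdeal K G).height + Nat.card H.ConnectedComponent
      ≤ (F.edgeSet.ncard + 2 * T.card : ℕ) + Nat.card H.ConnectedComponent := by
        gcongr
        exact (Ideal.height_mono hle).trans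
          (height_componentPrime_le fun i hi j hij => hT i hi j (hFH hij))
    _ = (Nat.card V + 2 * T.card : ℕ) := by
        rw [← hcard]
        push_cast
        ring

lemma card_le_htI_add_card_connectedComponent_of_isUnmixed
    (hG : IsUnmixed (binomialEdgeIdeal K G)) :
    (Nat.card V : ℕ∞) ≤ htI (binomialEdgeIdeal K G) + Nat.card G.ConnectedComponent := by
  classical
  obtain ⟨F, hFG, hF, hreach, hcard⟩ := exists_isAcyclic_card_edgeSet_add_card_connectedComponent G
  have hmin : componentPrime K ∅ F ∈ (binomialEdgeIdeal K G).minimalPrimes := by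
    refine componentPrime_mem_minimalPrimes (by simp) (binomialEdgeIdeal_mono hFG) (by simp) ?_
    exact binomialEdgeIdeal_le_componentPrime_iff.2 fun i j hij _ _ => hreach ▸ hij.reachable
  rw [← hG _ hmin, htI_eq_height, ← hcard, Nat.cast_add]
  gcongr
  exact card_edgeSet_le_height_componentPrime hF

lemma card_edgeSet_add_card_connectedComponent_of_mu_eq
    (hACI : (mu (binomialEdgeIdeal K G) : ℕ∞) = htI (binomialEdgeIdeal K G) + 1)
    (hht : (Nat.card V : ℕ∞) ≤ htI (binomialEdgeIdeal K G) + Nat.card G.ConnectedComponent) :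
    G.edgeSet.ncard + Nat.card G.ConnectedComponent = Nat.card V + 1 := by
  have hle := height_binomialEdgeIdeal_add_card_connectedComponent_le (K := K) (T := ∅) (G := G)
    (H := G) (by simp) fun _ _ hij _ _ => hij.reachable
  rw [← htI_eq_height, Finset.card_empty, Nat.mul_zero, Nat.add_zero] at hle
  rw [mu_eq_spanFinrank, spanFinrank_binomialEdgeIdeal] at hACI
  have hcard : (G.edgeSet.ncard : ℕ∞) + Nat.card G.ConnectedComponent = Nat.card V + 1 := by
    rw [hACI, add_right_comm, hle.antisymm hht]
  exact_mod_cast hcard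

lemma ncard_neighborSet_le_two_of_isBridge
    (hht : (Nat.card V : ℕ∞) ≤ htI (binomialEdgeIdeal K G) + Nat.card G.ConnectedComponent)
    {v : V} (hv : ∀ w, G.Adj v w → G.IsBridge s(v, w)) : (G.neighborSet v).ncard ≤ 2 := by
  have hle := height_binomialEdgeIdeal_add_card_connectedComponent_le (K := K) (T := {v}) (G := G)
    (H := G.deleteIncidenceSet v) (by simp [SimpleGraph.deleteIncidenceSet_adj])
    fun i j hij hi hj => (SimpleGraph.deleteIncidenceSet_adj.2
      ⟨hij, by simpa using hi, by simpa using hj⟩).reachable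
  rw [htI_eq_height] at hht
  have hfin : (binomialEdgeIdeal K G).height ≠ ⊤ := by
    rintro h
    simp [h] at hle
  lift (binomialEdgeIdeal K G).height to ℕ using hfin with h
  have hcomp := card_connectedComponent_add_ncard_neighborSet_le hv
  norm_cast at hht hle
  rw [Finset.card_singleton] at hle
  omega

end HeightBounds

theorem binomialEdgeIdeal_unmixed_aci_components_general
    (K : Type*) [Field K] {V : Type*} [Finite V] (G : SimpleGraph V)
    (hACI : (mu (binomialEdgeIdeal K G) : ℕ∞) = htI (binomialEdgeIdeal K G) + 1)
    (hht : (Nat.card V : ℕ∞) ≤ htI (binomialEdgeIdeal K G) + Nat.card G.ConnectedComponent) :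
    ∃ c₀ : G.ConnectedComponent, IsUnicyclic (G.induce (compSupp G c₀)) ∧
      ∀ c : G.ConnectedComponent, c ≠ c₀ → IsPathGraph (G.induce (compSupp G c)) := by
  obtain ⟨c₀, hc₀, htree⟩ := exists_isUnicyclic_and_isTree_of_card_edgeSet
    (card_edgeSet_add_card_connectedComponent_of_mu_eq hACI hht)
  refine ⟨c₀, hc₀, fun c hc => isPathGraph_of_isTree (htree c hc) fun ⟨v, hv⟩ => ?_⟩
  obtain rfl : G.connectedComponentMk v = c := hv
  have hdeg : (G.neighborSet v).ncard ≤ 2 := ncard_neighborSet_le_two_of_isBridge hht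
    fun w hvw => isBridge_of_isAcyclic_toSimpleGraph hvw (htree _ hc).isAcyclic
  refine le_trans ?_ hdeg
  exact Set.ncard_le_ncard_of_injOn Subtype.val (fun _ h => h) Subtype.val_injective.injOn

/-- If `J_G` is an unmixed almost complete intersection binomial
edge ideal and `G` has `c` connected components, then exactly one connected
component of `G` is a unicyclic graph and the other `c - 1` connected components
are path graphs. -/
theorem binomialEdgeIdeal_unmixed_aci_components
    (K : Type*) [Field K] (n : ℕ) (G : SimpleGraph (Fin n))
    (hACI : (mu (binomialEdgeIdeal K G) : ℕ∞) = htI (binomialEdgeIdeal K G) + 1)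
    (hUnmixed : IsUnmixed (binomialEdgeIdeal K G)) :
    ∃ c₀ : G.ConnectedComponent, IsUnicyclic (G.induce (compSupp G c₀)) ∧
      ∀ c : G.ConnectedComponent, c ≠ c₀ → IsPathGraph (G.induce (compSupp G c)) :=
  binomialEdgeIdeal_unmixed_aci_components_general K G hACI
    (card_le_htI_add_card_connectedComponent_of_isUnmixed hUnmixed)

end
end
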